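/- arXiv:1705.03976 — 10 statements merged into one kernel-verified Lean document; each statement's English description precedes it below -/
import Mathlib

section
/- Under these hypotheses, Φ'(r) > 0 for every r ≥ r₂. (This is part (i) of the paper's Lemma on the function Φ.) -/
open Set MeasureTheory Filter

/-!
With `V = V₀ + M₀ / r²`, one has `Φ(r) = r² (E₀ - V(r)) + M₀` for `r > 0`, hence
`Φ'(r) = 2 r (E₀ - V(r)) - r² V'(r)`. On `[r₂, ∞)` the function `V` decreases strictly from
`V(r₂) = E₀`, so the first term is nonnegative and the second contribution is positive.
-/

/-- Under the hypotheses of the paper's Lemma on `Φ` (radial potential `V₀` with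
`r² V₀(r)` extending to a `C³` function on `[0,∞)`, symbol-type derivative bounds,
energy `E₀ > 0`, angular momentum `M₀` the supremum of those `m ≥ 0` for which
`V_m = E₀` has at least two solutions, `Z` the solution set at `M₀` with maximum `r₂`,
`V_{M₀}' < 0` on `[r₂,∞)`, and `r₁` the maximum of `Z \ {r₂}`), the function
`Φ(r) = r²(E₀ − V₀(r))` satisfies `Φ'(r) > 0` for every `r ≥ r₂`. -/
theorem phi_deriv_pos
    (V₀ : ℝ → ℝ)
    (hext : ∃ W : ℝ → ℝ, ContDiffOn ℝ 3 W (Set.Ici 0) ∧ ∀ r > 0, W r = r ^ 2 * V₀ r)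
    (hbdd : ∃ b : ℝ, ∀ r > 0, b ≤ V₀ r)
    (C_V : ℝ)
    (hCV : ∀ k : ℕ, k ≤ 3 → ∀ r > 0, |r ^ (2 + k) * iteratedDeriv k V₀ r| ≤ C_V)
    (E₀ : ℝ) (hE₀ : 0 < E₀)
    (M₀ : ℝ)
    (hM₀ : IsLUB {m : ℝ | 0 ≤ m ∧ {r : ℝ | 0 < r ∧ V₀ r + m / r ^ 2 = E₀}.Nontrivial} M₀)
    (Z : Set ℝ) (hZ : Z = {r : ℝ | 0 < r ∧ V₀ r + M₀ / r ^ 2 = E₀})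
    (hZnt : Z.Nontrivial)
    (r₂ : ℝ) (hr₂ : IsGreatest Z r₂)
    (hmono : ∀ r ≥ r₂, deriv (fun s => V₀ s + M₀ / s ^ 2) r < 0)
    (r₁ : ℝ) (hr₁ : IsGreatest (Z \ {r₂}) r₁)
    (Φ : ℝ → ℝ) (hΦ : ∀ r, Φ r = r ^ 2 * (E₀ - V₀ r)) :
    ∀ r ≥ r₂, 0 < deriv Φ r := by
  set V : ℝ → ℝ := fun s => V₀ s + M₀ / s ^ 2 with hV
  have hr₂Z : 0 < r₂ ∧ V r₂ = E₀ := by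
    have h := hr₂.1
    rw [hZ] at h
    exact h
  obtain ⟨hr₂pos, hVr₂⟩ := hr₂Z
  -- `deriv` vanishes by convention where `V` is not differentiable, so `hmono` forces
  -- differentiability, also at the endpoint `r₂`.
  have hdiff : ∀ r ≥ r₂, DifferentiableAt ℝ V r := fun r hr =>
    differentiableAt_of_deriv_ne_zero (hmono r hr).ne
  have hanti : StrictAntiOn V (Ici r₂) := by
    refine strictAntiOn_of_deriv_neg (convex_Ici r₂)
      (fun r hr => (hdiff r hr).continuousAt.continuousWithinAt) ?_
    intro r hr
    exact hmono r (interior_subset hr)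
  intro r hr
  have hrpos : 0 < r := hr₂pos.trans_le hr
  have hle : V r ≤ E₀ := hVr₂ ▸ hanti.antitoneOn self_mem_Ici hr hr
  have heq : Φ =ᶠ[nhds r] fun s => s ^ 2 * (E₀ - V s) + M₀ := by
    filter_upwards [lt_mem_nhds hrpos] with s hs
    have hs0 : s ≠ 0 := ne_of_gt hs
    rw [hΦ, hV]
    field_simp
    ring
  have hd : HasDerivAt (fun s => s ^ 2 * (E₀ - V s) + M₀)
      (2 * r * (E₀ - V r) + r ^ 2 * (-deriv V r)) r := by
    have h := ((hasDerivAt_pow 2 r).mul ((hdiff r hr).hasDerivAt.const_sub E₀)).add_const M₀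
    simpa using h
  rw [heq.deriv_eq, hd.deriv]
  have h1 : 0 ≤ 2 * r * (E₀ - V r) := mul_nonneg (by positivity) (sub_nonneg.2 hle)
  have h2 : 0 < r ^ 2 * (-deriv V r) := mul_pos (by positivity) (neg_pos.2 (hmono r hr))
  linarith
end

section
/- Under these hypotheses, Φ(r₁) = Φ(r₂) = M₀, and Φ(r) < M₀ for every r with r₁ < r < r₂. -/
/-!
For `r > 0` the equation `V₀ r + M₀ / r ^ 2 = E₀` says exactly `Φ r = M₀`, so `Z` is a level set of
`Φ`, and `Φ` does not take the value `M₀` strictly between `r₁` and `r₂`. Since the derivative of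
`V₀ + M₀ / r ^ 2` is negative at `r₂`, this function exceeds `E₀` immediately to the left of `r₂`,
i.e. `Φ < M₀` there. If `Φ r > M₀` for some `r` in `(r₁, r₂)`, the intermediate value theorem would
produce a point of `Z` strictly between `r₁` and `r₂`.
-/

open Set MeasureTheory Filter

theorem phi_eq_M0_and_lt_between
    (V₀ : ℝ → ℝ)
    (hext : ∃ W : ℝ → ℝ, ContDiffOn ℝ 3 W (Set.Ici 0) ∧ ∀ r > 0, W r = r ^ 2 * V₀ r)
    (hbdd : ∃ b : ℝ, ∀ r > 0, b ≤ V₀ r)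
    (C_V : ℝ)
    (hCV : ∀ k : ℕ, k ≤ 3 → ∀ r > 0, |r ^ (2 + k) * iteratedDeriv k V₀ r| ≤ C_V)
    (E₀ : ℝ) (hE₀ : 0 < E₀)
    (M₀ : ℝ)
    (hM₀ : IsLUB {m : ℝ | 0 ≤ m ∧ {r : ℝ | 0 < r ∧ V₀ r + m / r ^ 2 = E₀}.Nontrivial} M₀)
    (Z : Set ℝ) (hZ : Z = {r : ℝ | 0 < r ∧ V₀ r + M₀ / r ^ 2 = E₀})
    (hZnt : Z.Nontrivial)
    (r₂ : ℝ) (hr₂ : IsGreatest Z r₂)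
    (hmono : ∀ r ≥ r₂, deriv (fun s => V₀ s + M₀ / s ^ 2) r < 0)
    (r₁ : ℝ) (hr₁ : IsGreatest (Z \ {r₂}) r₁)
    (Φ : ℝ → ℝ) (hΦ : ∀ r, Φ r = r ^ 2 * (E₀ - V₀ r)) :
    Φ r₁ = M₀ ∧ Φ r₂ = M₀ ∧ ∀ r : ℝ, r₁ < r → r < r₂ → Φ r < M₀ := by
  obtain ⟨W, hW, hWV⟩ := hext
  have hΦW : ∀ r > 0, Φ r = r ^ 2 * E₀ - W r := fun r hr => by
    rw [hΦ, hWV r hr]; ring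
  -- Only on `r > 0`: `Φ 0 = 0`, whereas the limit of `Φ` at `0` is `-W 0`, which may be nonzero.
  have hcont : ContinuousOn Φ (Ioi 0) := by
    have h : ContinuousOn (fun r => r ^ 2 * E₀ - W r) (Ioi 0) :=
      (by fun_prop : ContinuousOn (fun r : ℝ => r ^ 2 * E₀) (Ioi 0)).sub
        (hW.continuousOn.mono Ioi_subset_Ici_self)
    exact h.congr fun r hr => hΦW r hr
  have key : ∀ r > 0, V₀ r + M₀ / r ^ 2 - E₀ = (M₀ - Φ r) / r ^ 2 := fun r hr => by
    rw [hΦ]; field_simp; ring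
  have memZ : ∀ r, r ∈ Z ↔ 0 < r ∧ Φ r = M₀ := fun r => by
    rw [hZ]
    refine and_congr_right fun hr => ?_
    have hr2 : r ^ 2 ≠ 0 := by positivity
    rw [← sub_eq_zero, key r hr, div_eq_zero_iff, or_iff_left hr2, sub_eq_zero, eq_comm]
  obtain ⟨hr₁pos, h₁⟩ := (memZ r₁).1 hr₁.1.1
  obtain ⟨hr₂pos, h₂⟩ := (memZ r₂).1 hr₂.1
  have hne : ∀ r, r₁ < r → r < r₂ → Φ r ≠ M₀ := fun r h1 h2 h =>
    absurd (hr₁.2 ⟨(memZ r).2 ⟨hr₁pos.trans h1, h⟩, h2.ne⟩) (not_le.2 h1)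
  refine ⟨h₁, h₂, fun r h1 h2 => ?_⟩
  by_contra hcon
  have hrpos : 0 < r := hr₁pos.trans h1
  have hd := hmono r₂ le_rfl
  have hder := (differentiableAt_of_deriv_ne_zero hd.ne).hasDerivAt
  have hslope := ((hasDerivAt_iff_tendsto_slope.1 hder).mono_left
    (nhdsLT_le_nhdsNE r₂)).eventually_lt_const hd
  obtain ⟨s, hs, hrs, hs2⟩ := (hslope.and (Ioo_mem_nhdsLT h2)).exists
  have hspos : 0 < s := hrpos.trans hrs
  have hΦs : Φ s < M₀ := by
    have e₂ := key r₂ hr₂pos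
    rw [h₂, sub_self, zero_div] at e₂
    rw [slope_def_field, div_neg_iff] at hs
    have hlt : 0 < V₀ s + M₀ / s ^ 2 - E₀ := by
      rcases hs with h | h <;> linarith [h.1, h.2]
    rw [key s hspos, div_pos_iff_of_pos_right (by positivity)] at hlt
    linarith
  obtain ⟨t, ht, hΦt⟩ := intermediate_value_Icc' hrs.le
    (hcont.mono fun x hx => hrpos.trans_le hx.1) ⟨hΦs.le, not_lt.1 hcon⟩
  exact hne t (h1.trans_le ht.1) (ht.2.trans_lt hs2) hΦt
end

section
/- Under these hypotheses, Φ(r) ≤ M₀ for every r with 0 < r ≤ r₂; equivalently, V_{M₀}(r) ≥ E₀ for all r ∈ (0, r₂]. -/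
/-!
For `r > 0` the equation `V₀ r + m / r ^ 2 = E₀` says exactly that `Φ r = m`, where
`Φ r = r ^ 2 * (E₀ - V₀ r)`. The function `Φ` is continuous on `(0, ∞)`, and since
`r ^ 2 * V₀ r` is bounded it tends to infinity with `r`. If `Φ r > M₀` for some `r < r₂`, take
`m` strictly between `M₀ = Φ r₂` and `Φ r`. By the intermediate value theorem `Φ` takes the value
`m` both in `[r, r₂]` and in `[r₂, ∞)`, at two different points since `Φ r₂ ≠ m`. So `m > M₀`
belongs to the set of which `M₀` is the supremum, a contradiction.
-/


open Set MeasureTheory Filter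

theorem phi_le_M0_on_ball
    (V₀ : ℝ → ℝ)
    (hext : ∃ W : ℝ → ℝ, ContDiffOn ℝ 3 W (Set.Ici 0) ∧ ∀ r > 0, W r = r ^ 2 * V₀ r)
    (hbdd : ∃ b : ℝ, ∀ r > 0, b ≤ V₀ r)
    (C_V : ℝ)
    (hCV : ∀ k : ℕ, k ≤ 3 → ∀ r > 0, |r ^ (2 + k) * iteratedDeriv k V₀ r| ≤ C_V)
    (E₀ : ℝ) (hE₀ : 0 < E₀)
    (M₀ : ℝ)
    (hM₀ : IsLUB {m : ℝ | 0 ≤ m ∧ {r : ℝ | 0 < r ∧ V₀ r + m / r ^ 2 = E₀}.Nontrivial} M₀)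
    (Z : Set ℝ) (hZ : Z = {r : ℝ | 0 < r ∧ V₀ r + M₀ / r ^ 2 = E₀})
    (hZnt : Z.Nontrivial)
    (r₂ : ℝ) (hr₂ : IsGreatest Z r₂)
    (hmono : ∀ r ≥ r₂, deriv (fun s => V₀ s + M₀ / s ^ 2) r < 0)
    (r₁ : ℝ) (hr₁ : IsGreatest (Z \ {r₂}) r₁)
    (Φ : ℝ → ℝ) (hΦ : ∀ r, Φ r = r ^ 2 * (E₀ - V₀ r)) :
    (∀ r : ℝ, 0 < r → r ≤ r₂ → Φ r ≤ M₀) ∧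
    (∀ r : ℝ, 0 < r → r ≤ r₂ → E₀ ≤ V₀ r + M₀ / r ^ 2) := by
  obtain ⟨W, hW, hWV⟩ := hext
  have hiff : ∀ m r : ℝ, 0 < r → (V₀ r + m / r ^ 2 = E₀ ↔ Φ r = m) := by
    intro m r hr
    have hr' : r ≠ 0 := hr.ne'
    rw [hΦ]
    field_simp
    constructor <;> intro h <;> linarith
  have hcont : ContinuousOn Φ (Set.Ioi 0) := by
    have h : ContinuousOn (fun r => r ^ 2 * E₀ - W r) (Set.Ioi 0) :=
      (by fun_prop : Continuous fun r : ℝ => r ^ 2 * E₀).continuousOn.sub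
        (hW.continuousOn.mono Set.Ioi_subset_Ici_self)
    refine h.congr fun r hr => ?_
    rw [hΦ]
    simp only [hWV r hr]
    ring
  have hgrow : ∀ r > 0, r ^ 2 * E₀ - C_V ≤ Φ r := by
    intro r hr
    have h := hCV 0 (by norm_num) r hr
    simp only [add_zero, iteratedDeriv_zero] at h
    rw [hΦ]
    linarith [le_abs_self (r ^ 2 * V₀ r)]
  -- An empty set of reals has no least upper bound, so the set is nonempty.
  have hM₀_nonneg : 0 ≤ M₀ := by
    obtain ⟨m, hm⟩ := hM₀.nonempty
    exact hm.1.trans (hM₀.1 hm)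
  obtain ⟨hr₂pos, hr₂eq⟩ : 0 < r₂ ∧ V₀ r₂ + M₀ / r₂ ^ 2 = E₀ := by
    have h := hr₂.1
    rw [hZ] at h
    exact h
  have hΦr₂ : Φ r₂ = M₀ := (hiff _ _ hr₂pos).1 hr₂eq
  have key : ∀ r : ℝ, 0 < r → r ≤ r₂ → Φ r ≤ M₀ := by
    intro r hr hrr₂
    by_contra! hlt
    obtain ⟨m, hm₁, hm₂⟩ := exists_between hlt
    have htop : Tendsto Φ atTop atTop := by
      refine tendsto_atTop_mono' atTop
        ((eventually_gt_atTop (0 : ℝ)).mono hgrow) ?_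
      exact tendsto_atTop_add_const_right _ _
        ((tendsto_pow_atTop two_ne_zero).atTop_mul_const hE₀)
    obtain ⟨R, hRm, hR⟩ := ((htop.eventually_ge_atTop m).and (eventually_ge_atTop r₂)).exists
    obtain ⟨a, ha, ham⟩ := intermediate_value_Icc' hrr₂
      (hcont.mono fun x hx => hr.trans_le hx.1) ⟨hΦr₂.trans_le hm₁.le, hm₂.le⟩
    obtain ⟨b, hb, hbm⟩ := intermediate_value_Icc hR
      (hcont.mono fun x hx => hr₂pos.trans_le hx.1) ⟨hΦr₂.trans_le hm₁.le, hRm⟩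
    have ha0 : 0 < a := hr.trans_le ha.1
    have hb0 : 0 < b := hr₂pos.trans_le hb.1
    have hab : a ≠ b := by
      intro hab
      have har₂ : a = r₂ := le_antisymm ha.2 (hab ▸ hb.1)
      rw [har₂, hΦr₂] at ham
      exact hm₁.ne ham
    exact hm₁.not_ge (hM₀.1 ⟨hM₀_nonneg.trans hm₁.le,
      a, ⟨ha0, (hiff m a ha0).2 ham⟩, b, ⟨hb0, (hiff m b hb0).2 hbm⟩, hab⟩)
  refine ⟨key, fun r hr hrr₂ => ?_⟩
  have h := key r hr hrr₂
  rw [hΦ] at h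
  have h' : E₀ - V₀ r ≤ M₀ / r ^ 2 := by
    rw [le_div_iff₀ (by positivity)]
    linarith
  linarith
end

section
/- There exists C > 0 such that for all h ∈ (0,1], the Gaussian quasimode w_h(r) = e^{−α(r−r₁)²/(2h)} χ(r) satisfies ∫₀^{r₂} ( h² w_h'(r)² + (V(r) − E₀) w_h(r)² ) dr ≤ C h ∫₀^{r₂} w_h(r)² dr. -/
/-!
Write `x = r - r₁`, `e = exp (-α x² / (2h))` and `w = e χ`. The bound on `V` gives the pointwise
estimate
`h² w'² + (V - E₀) w² ≤ h² e² χ'² + (α + C₁) h w² - α h (x w²)'`: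
the derivative `(x w²)' = w² - (2α/h) x² w² + 2 x e² χ χ'` absorbs both the quadratic potential and
the cross term of `w'²`. The exact derivative integrates to `0` because `χ` vanishes at `0` and `r₂`,
so only `h² ∫ e² χ'²` is left to control.

If `χ = 1` for `|x| < δ`, then `χ'` lives on `|x| ≥ δ`, where `e² ≤ exp (-α δ² / h)`, whereas
`∫ w² ≥ 2 δ exp (-α δ² / h)` from the region `|x| < δ`. Hence
`∫ e² χ'² ≤ (∫ χ'²) / (2 δ) * ∫ w²`, uniformly in `h`, and `h² ≤ h` concludes.
-/


open Set MeasureTheory Filter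

theorem hasDerivAt_gaussian (r₁ α h r : ℝ) (hh : 0 < h) :
    HasDerivAt (fun s => Real.exp (-(α * (s - r₁) ^ 2) / (2 * h)))
      (Real.exp (-(α * (r - r₁) ^ 2) / (2 * h)) * (-(α * (r - r₁)) / h)) r := by
  have h1 : HasDerivAt (fun s : ℝ => -(α * (s - r₁) ^ 2) / (2 * h)) (-(α * (r - r₁)) / h) r := by
    have := (((((hasDerivAt_id r).sub_const r₁).pow 2).const_mul α).neg).div_const (2 * h)
    refine this.congr_deriv ?_
    simp only [id]
    field_simp
    norm_num
    ring
  exact h1.exp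

theorem gaussian_sq (r₁ α h r : ℝ) (hh : 0 < h) :
    Real.exp (-(α * (r - r₁) ^ 2) / (2 * h)) ^ 2 = Real.exp (-(α * (r - r₁) ^ 2) / h) := by
  rw [← Real.exp_nat_mul]
  congr 1
  push_cast
  field_simp

/-- The exact derivative used to absorb the potential has zero mean, since `(r - r₁) w²` vanishes at
both endpoints. -/
theorem integral_deriv_mul_sq_eq_zero {r₁ r₂ : ℝ} (hr₂ : 0 ≤ r₂) {w w' : ℝ → ℝ}
    (hw : ∀ r, HasDerivAt w (w' r) r) (hw' : Continuous w') (h0 : w 0 = 0) (h2 : w r₂ = 0) :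
    ∫ r in Set.Ioo (0:ℝ) r₂, (w r ^ 2 + 2 * (r - r₁) * w r * w' r) = 0 := by
  have hwc : Continuous w := continuous_iff_continuousAt.2 fun r => (hw r).continuousAt
  rw [← integral_Ioc_eq_integral_Ioo, ← intervalIntegral.integral_of_le hr₂]
  rw [intervalIntegral.integral_eq_sub_of_hasDerivAt (f := fun r => (r - r₁) * w r ^ 2)]
  · simp [h0, h2]
  · intro r _
    refine (((hasDerivAt_id r).sub_const r₁).mul ((hw r).pow 2)).congr_deriv ?_
    simp only [id]
    norm_num
    ring
  · exact Continuous.intervalIntegrable (by fun_prop) _ _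

/-- Gaussian quasimode estimate: if `χ ∈ C_c^∞((0,r₂);[0,1])` equals `1` near `r₁`,
`V` is continuous on `(0,r₂)` and `V(r) − E₀ ≤ α²(r−r₁)² + C₁ h` on `supp χ` for all
`h ∈ (0,1]`, then there is `C > 0` such that for all `h ∈ (0,1]` the quasimode
`w_h(r) = e^{−α(r−r₁)²/(2h)} χ(r)` satisfies
`∫₀^{r₂} (h² w_h'² + (V − E₀) w_h²) ≤ C h ∫₀^{r₂} w_h²`. -/
theorem gaussian_quasimode_estimate
    (r₁ r₂ E₀ α C₁ : ℝ)
    (hr₁ : 0 < r₁) (hr₁₂ : r₁ < r₂)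
    (hα : 0 < α) (hC₁ : 0 ≤ C₁)
    (V : ℝ → ℝ) (hV : ContinuousOn V (Set.Ioo 0 r₂))
    (χ : ℝ → ℝ) (hχsmooth : ContDiff ℝ (⊤ : ℕ∞) χ) (hχcpt : HasCompactSupport χ)
    (hχsupp : tsupport χ ⊆ Set.Ioo 0 r₂)
    (hχrange : ∀ r, χ r ∈ Set.Icc (0:ℝ) 1)
    (hχone : ∀ᶠ r in nhds r₁, χ r = 1)
    (hVbound : ∀ h ∈ Set.Ioc (0:ℝ) 1, ∀ r ∈ tsupport χ,
      V r - E₀ ≤ α ^ 2 * (r - r₁) ^ 2 + C₁ * h) :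
    ∃ C > (0:ℝ), ∀ h ∈ Set.Ioc (0:ℝ) 1,
      (∫ r in Set.Ioo (0:ℝ) r₂,
          (h ^ 2 * (deriv (fun s => Real.exp (-(α * (s - r₁) ^ 2) / (2 * h)) * χ s) r) ^ 2
            + (V r - E₀) * (Real.exp (-(α * (r - r₁) ^ 2) / (2 * h)) * χ r) ^ 2))
        ≤ C * h * ∫ r in Set.Ioo (0:ℝ) r₂,
            (Real.exp (-(α * (r - r₁) ^ 2) / (2 * h)) * χ r) ^ 2 := by
  obtain ⟨δ, hδ, hball⟩ := Metric.eventually_nhds_iff_ball.1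
    (hχone.and (Ioo_mem_nhds hr₁ hr₁₂))
  have hr₂ : 0 < r₂ := hr₁.trans hr₁₂
  have hχd : Differentiable ℝ χ := hχsmooth.differentiable (by simp)
  have hχ'c : Continuous (deriv χ) := hχsmooth.continuous_deriv (by simp)
  have hχc : Continuous χ := hχsmooth.continuous
  have hint : ∀ f : ℝ → ℝ, Continuous f → IntegrableOn f (Ioo 0 r₂) := fun f hf =>
    (hf.integrableOn_Icc (a := 0) (b := r₂)).mono_set Ioo_subset_Icc_self
  have hχ0 : χ 0 = 0 := image_eq_zero_of_notMem_tsupport fun hm => (hχsupp hm).1.false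
  have hχ2 : χ r₂ = 0 := image_eq_zero_of_notMem_tsupport fun hm => (hχsupp hm).2.false
  have hχ'far : ∀ r, |r - r₁| < δ → deriv χ r = 0 := by
    intro r hr
    have hr' : r ∈ Metric.ball r₁ δ := by rwa [Metric.mem_ball, Real.dist_eq]
    have : χ =ᶠ[nhds r] fun _ => 1 := by
      filter_upwards [Metric.isOpen_ball.mem_nhds hr'] with s hs using (hball s hs).1
    rw [this.deriv_eq, deriv_const]
  set K : ℝ := ∫ r in Ioo (0:ℝ) r₂, deriv χ r ^ 2 with hK
  have hK0 : 0 ≤ K := integral_nonneg fun r => sq_nonneg _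
  refine ⟨α + C₁ + K / (2 * δ), by positivity, ?_⟩
  rintro h ⟨hh, hh1⟩
  set e : ℝ → ℝ := fun s => Real.exp (-(α * (s - r₁) ^ 2) / (2 * h)) with he
  have hec : Continuous e := by
    rw [he]
    fun_prop
  set w' : ℝ → ℝ := fun r => e r * (-(α * (r - r₁)) / h) * χ r + e r * deriv χ r with hw'def
  have hw : ∀ r, HasDerivAt (fun s => e s * χ s) (w' r) r := fun r =>
    (hasDerivAt_gaussian r₁ α h r hh).mul (hχd r).hasDerivAt
  have hw'c : Continuous w' := by
    rw [hw'def]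
    fun_prop
  have hzero := integral_deriv_mul_sq_eq_zero (r₁ := r₁) hr₂.le hw hw'c (by simp [hχ0])
    (by simp [hχ2])
  set ε : ℝ := Real.exp (-(α * δ ^ 2) / h) with hε
  have hε0 : 0 < ε := Real.exp_pos _
  set W : ℝ := ∫ r in Ioo (0:ℝ) r₂, (e r * χ r) ^ 2 with hW
  have hW0 : 0 ≤ W := integral_nonneg fun r => sq_nonneg _
  have hmass : 2 * δ * ε ≤ W := by
    have hsub : Ioo (r₁ - δ) (r₁ + δ) ⊆ Ioo 0 r₂ := by
      rw [← Real.ball_eq_Ioo]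
      exact fun r hr => (hball r hr).2
    calc 2 * δ * ε = ∫ _ in Ioo (r₁ - δ) (r₁ + δ), ε := by
          rw [setIntegral_const, measureReal_def, Real.volume_Ioo,
            ENNReal.toReal_ofReal (by linarith), smul_eq_mul]
          ring
      _ ≤ ∫ r in Ioo (r₁ - δ) (r₁ + δ), (e r * χ r) ^ 2 := by
          refine setIntegral_mono_on (integrableOn_const (by simp))
            ((hint _ (by fun_prop)).mono_set hsub) measurableSet_Ioo fun r hr => ?_
          have hr' : r ∈ Metric.ball r₁ δ := by rwa [Real.ball_eq_Ioo]
          rw [(hball r hr').1, mul_one, he, hε]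
          simp only
          rw [gaussian_sq r₁ α h r hh]
          have : (r - r₁) ^ 2 ≤ δ ^ 2 := sq_le_sq' (by linarith [hr.1]) (by linarith [hr.2])
          gcongr
      _ ≤ W := setIntegral_mono_set (hint _ (by fun_prop))
          (ae_of_all _ fun r => sq_nonneg _) hsub.eventuallyLE
  have htail : ∀ r, e r ^ 2 * deriv χ r ^ 2 ≤ ε * deriv χ r ^ 2 := by
    intro r
    by_cases hr : |r - r₁| < δ
    · simp [hχ'far r hr]
    · have : δ ^ 2 ≤ (r - r₁) ^ 2 := by
        rw [← sq_abs (r - r₁)]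
        exact pow_le_pow_left₀ hδ.le (not_lt.1 hr) 2
      refine mul_le_mul_of_nonneg_right ?_ (sq_nonneg _)
      rw [he, hε]
      simp only
      rw [gaussian_sq r₁ α h r hh]
      gcongr
  have hpt : ∀ r, h ^ 2 * deriv (fun s => e s * χ s) r ^ 2 + (V r - E₀) * (e r * χ r) ^ 2 ≤
      h * ε * deriv χ r ^ 2 + (α + C₁) * h * (e r * χ r) ^ 2
        - α * h * ((e r * χ r) ^ 2 + 2 * (r - r₁) * (e r * χ r) * w' r) := by
    intro r
    rw [(hw r).deriv]
    have hV' : (V r - E₀) * (e r * χ r) ^ 2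
        ≤ (α ^ 2 * (r - r₁) ^ 2 + C₁ * h) * (e r * χ r) ^ 2 := by
      by_cases hr : r ∈ tsupport χ
      · exact mul_le_mul_of_nonneg_right (hVbound h ⟨hh, hh1⟩ r hr) (sq_nonneg _)
      · simp [image_eq_zero_of_notMem_tsupport hr]
    have h3 : h ^ 2 * (e r ^ 2 * deriv χ r ^ 2) ≤ h * (ε * deriv χ r ^ 2) :=
      mul_le_mul (by nlinarith) (htail r) (by positivity) hh.le
    have hid : h ^ 2 * w' r ^ 2 + (α ^ 2 * (r - r₁) ^ 2 + C₁ * h) * (e r * χ r) ^ 2 =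
        h ^ 2 * (e r ^ 2 * deriv χ r ^ 2) + (α + C₁) * h * (e r * χ r) ^ 2
        - α * h * ((e r * χ r) ^ 2 + 2 * (r - r₁) * (e r * χ r) * w' r) := by
      simp only [hw'def]
      field_simp
      ring
    linarith
  have hKW : ε * K ≤ K / (2 * δ) * W := by
    rw [div_mul_eq_mul_div, le_div_iff₀ (by positivity)]
    nlinarith
  by_cases hi : IntegrableOn (fun r => h ^ 2 * deriv (fun s => e s * χ s) r ^ 2
      + (V r - E₀) * (e r * χ r) ^ 2) (Ioo 0 r₂)
  · have i1 : IntegrableOn (fun r => h * ε * deriv χ r ^ 2) (Ioo 0 r₂) := hint _ (by fun_prop)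
    have i2 : IntegrableOn (fun r => (α + C₁) * h * (e r * χ r) ^ 2) (Ioo 0 r₂) :=
      hint _ (by fun_prop)
    have i12 : IntegrableOn (fun r => h * ε * deriv χ r ^ 2 + (α + C₁) * h * (e r * χ r) ^ 2)
        (Ioo 0 r₂) := i1.add i2
    have i3 : IntegrableOn (fun r => α * h * ((e r * χ r) ^ 2
        + 2 * (r - r₁) * (e r * χ r) * w' r)) (Ioo 0 r₂) := hint _ (by fun_prop)
    refine (integral_mono hi (i12.sub i3) hpt).trans ?_
    have hsplit : ∫ r in Ioo (0:ℝ) r₂, (h * ε * deriv χ r ^ 2 + (α + C₁) * h * (e r * χ r) ^ 2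
        - α * h * ((e r * χ r) ^ 2 + 2 * (r - r₁) * (e r * χ r) * w' r))
        = h * ε * K + (α + C₁) * h * W := by
      rw [integral_sub i12 i3, integral_add i1 i2, integral_const_mul,
        integral_const_mul, integral_const_mul, hzero]
      ring
    refine hsplit.le.trans ?_
    nlinarith [mul_le_mul_of_nonneg_left hKW hh.le]
  -- A non-integrable integrand would have Bochner integral `0`, and the right side is nonnegative.
  · rw [integral_undef hi]
    positivity
end

section
/- Define, for h > 0, λ(h) = inf over nonzero u ∈ C_c^∞((0,r₂)) of the Rayleigh quotient [∫₀^{r₂} ( h² u'(r)² + V_{M₀}(r) u(r)² ) dr] / [∫₀^{r₂} u(r)² dr]. Then there is C > 0 such that E₀ ≤ λ(h) ≤ E₀ + C h for all h ∈ (0,1]. (This expresses that the bottom of the Dirichlet spectrum of −h²∂_r² + V_{M₀} on (0,r₂) equals E₀ + O(h).) -/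
open Set MeasureTheory Filter

/-!
The lower bound says that `V = V₀ + M₀ / r²` stays above `E₀` on `(0, r₂)`. If `V s < E₀` for some
`s < r₂`, then for `m` slightly larger than `M₀` the potential `V₀ + m / r²` is below `E₀` at `s`,
above `E₀` at `r₂`, and below `E₀` again at `r₂ + 1`, so it takes the value `E₀` twice,
contradicting the definition of `M₀` as a supremum (`le_of_isLUB`). Integrating against `u²` gives
`E₀ ≤ λ(h)` (`le_rayleigh`).

For the upper bound, `r₁` is then an interior minimum of `V` on `(0, r₂)`, with value `E₀`, so
`V r ≤ E₀ + K (r - r₁)²` near `r₁` (`quadratic_bound`). The trial functions `φ ((r - r₁) / √h)`,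
for a fixed bump `φ`, have Rayleigh quotient at most `E₀ + h ∫ (φ'² + K y² φ²) / ∫ φ²`
(`exists_trial`): at the length scale `√h` the kinetic and the potential energy are both of order
`h`.
-/

/-- Near a critical point, a `C²` function exceeds its critical value by at most a quadratic error. -/
lemma quadratic_bound {f : ℝ → ℝ} {s : Set ℝ} (hs : IsOpen s) (hf : ContDiffOn ℝ 2 f s)
    {a : ℝ} (ha : a ∈ s) (hd : deriv f a = 0) :
    ∃ K ≥ (0:ℝ), ∃ δ > (0:ℝ), ∀ x, |x - a| ≤ δ → f x ≤ f a + K * (x - a) ^ 2 := by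
  have hd1 : ContDiffAt ℝ 1 (deriv f) a :=
    (hf.deriv_of_isOpen hs (by norm_num)).contDiffAt (hs.mem_nhds ha)
  obtain ⟨K, t, ht, hK⟩ := hd1.exists_lipschitzOnWith
  obtain ⟨δ, hδ, hball⟩ := Metric.mem_nhds_iff.1 (inter_mem ht (hs.mem_nhds ha))
  refine ⟨K, K.2, δ / 2, by positivity, fun x hx => ?_⟩
  have hsub : ∀ y ∈ Metric.closedBall a |x - a|, y ∈ t ∧ y ∈ s := fun y hy =>
    hball (Metric.mem_ball.2 (lt_of_le_of_lt (Metric.mem_closedBall.1 hy) (by linarith)))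
  have h0 := Convex.norm_image_sub_le_of_norm_deriv_le (𝕜 := ℝ) (f := f) (C := K * |x - a|)
    (s := Metric.closedBall a |x - a|) (x := a) (y := x)
    (fun y hy => (hf.differentiableOn (by norm_num)).differentiableAt
      (hs.mem_nhds (hsub y hy).2)) (fun y hy => ?_) (convex_closedBall _ _)
    (Metric.mem_closedBall_self (abs_nonneg _)) (by simp [Real.dist_eq])
  · have h1 : f x - f a ≤ K * |x - a| * |x - a| := (le_abs_self _).trans h0
    have h2 : |x - a| * |x - a| = (x - a) ^ 2 := by rw [abs_mul_abs_self]; ring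
    rw [mul_assoc, h2] at h1
    linarith
  · have h1 := hK.dist_le_mul y (hsub y hy).1 a (mem_of_mem_nhds ht)
    rw [hd, dist_zero_right] at h1
    exact h1.trans (mul_le_mul_of_nonneg_left (Metric.mem_closedBall.1 hy) K.2)

/-- `V₀ + M₀ / r²` stays above the level `E₀` to the left of `r₂`: otherwise a slight increase of
`M₀` would still give two crossings of that level. -/
lemma le_of_isLUB {V₀ : ℝ → ℝ} (hV₀ : ContinuousOn V₀ (Ioi 0)) {E₀ M₀ r₂ : ℝ}
    (hM₀ : IsLUB {m : ℝ | 0 ≤ m ∧ {r : ℝ | 0 < r ∧ V₀ r + m / r ^ 2 = E₀}.Nontrivial} M₀)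
    (hr₂ : 0 < r₂) (hE : V₀ r₂ + M₀ / r₂ ^ 2 = E₀) {R : ℝ} (hR : r₂ < R)
    (hER : V₀ R + M₀ / R ^ 2 < E₀) {s : ℝ} (hs : s ∈ Ioo 0 r₂) :
    E₀ ≤ V₀ s + M₀ / s ^ 2 := by
  by_contra! hlt
  obtain ⟨m₁, hm₁⟩ := hM₀.nonempty
  have hM0 : 0 ≤ M₀ := hm₁.1.trans (hM₀.1 hm₁)
  have hs0 : 0 < s := hs.1
  have hR0 : 0 < R := hr₂.trans hR
  obtain ⟨ε, hε, hεlt⟩ := exists_between (show (0:ℝ) <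
    min ((E₀ - (V₀ s + M₀ / s ^ 2)) * s ^ 2) ((E₀ - (V₀ R + M₀ / R ^ 2)) * R ^ 2) from
    lt_min (mul_pos (by linarith) (by positivity)) (mul_pos (by linarith) (by positivity)))
  obtain ⟨hεs, hεR⟩ := lt_min_iff.1 hεlt
  set g : ℝ → ℝ := fun r => V₀ r + (M₀ + ε) / r ^ 2 with hg
  have hcont : ContinuousOn g (Ioi 0) :=
    hV₀.add (continuousOn_const.div (continuousOn_id.pow 2)
      fun x hx => pow_ne_zero 2 (ne_of_gt hx))
  have hgs : g s < E₀ := by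
    have := (div_lt_iff₀ (by positivity : 0 < s ^ 2)).2 hεs
    simp only [hg, add_div]; linarith
  have hgR : g R < E₀ := by
    have := (div_lt_iff₀ (by positivity : 0 < R ^ 2)).2 hεR
    simp only [hg, add_div]; linarith
  have hg2 : E₀ < g r₂ := by
    have : 0 < ε / r₂ ^ 2 := by positivity
    simp only [hg, add_div]; linarith
  obtain ⟨x, hx, hgx⟩ := intermediate_value_Ioo hs.2.le
    (hcont.mono fun y hy => hs0.trans_le hy.1) ⟨hgs, hg2⟩
  obtain ⟨y, hy, hgy⟩ := intermediate_value_Ioo' hR.le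
    (hcont.mono fun y hy => hr₂.trans_le hy.1) ⟨hgR, hg2⟩
  have hle := hM₀.1 (show M₀ + ε ∈ _ from ⟨by linarith, x, ⟨hs0.trans hx.1, hgx⟩,
    y, ⟨hr₂.trans hy.1, hgy⟩, (hx.2.trans hy.1).ne⟩)
  linarith

/-- Functions vanishing off the support of a test function have the same integral over `s` as over
the line, where translation and scaling are available. -/
lemma setIntegral_eq_of_tsupport_subset {f u : ℝ → ℝ} {s : Set ℝ} (hu : tsupport u ⊆ s)
    (hf : ∀ x, x ∉ tsupport u → f x = 0) : ∫ r in s, f r = ∫ r, f r :=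
  setIntegral_eq_integral_of_forall_compl_eq_zero fun x hx => hf x fun h => hx (hu h)

lemma integrable_energy {V u : ℝ → ℝ} {r₂ h : ℝ} (hV : ContinuousOn V (Ioi 0))
    (hu : ContDiff ℝ (⊤ : ℕ∞) u) (hc : HasCompactSupport u) (hsupp : tsupport u ⊆ Ioo 0 r₂) :
    Integrable fun r => h ^ 2 * (deriv u r) ^ 2 + V r * (u r) ^ 2 := by
  have hd : Continuous (deriv u) := hu.continuous_deriv (by norm_num)
  have hz : ∀ x, x ∉ tsupport u → h ^ 2 * (deriv u x) ^ 2 + V x * (u x) ^ 2 = 0 := fun x hx => by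
    rw [image_eq_zero_of_notMem_tsupport hx,
      image_eq_zero_of_notMem_tsupport fun h' => hx (tsupport_deriv_subset h')]
    simp
  refine Continuous.integrable_of_hasCompactSupport ?_ (HasCompactSupport.intro hc hz)
  -- `V` may be discontinuous at `0`, but it only matters on the support of `u`.
  refine continuous_of_tsupport fun x hx => ?_
  have hx' : x ∈ tsupport u := closure_minimal
    (fun y hy => by_contra fun hn => Function.mem_support.1 hy (hz y hn)) (isClosed_tsupport u) hx
  exact (continuousAt_const.mul (hd.continuousAt.pow 2)).add
    ((hV.continuousAt (Ioi_mem_nhds (hsupp hx').1)).mul (hu.continuous.continuousAt.pow 2))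

lemma integral_sq_pos {u : ℝ → ℝ} (hu : Continuous u) (hc : HasCompactSupport u) (h0 : u ≠ 0) :
    0 < ∫ r, (u r) ^ 2 := by
  obtain ⟨x, hx⟩ := Function.ne_iff.1 h0
  exact (hu.pow 2).integral_pos_of_hasCompactSupport_nonneg_nonzero
    (hc.comp_left (g := fun y : ℝ => y ^ 2) (by simp)) (fun _ => sq_nonneg _) (x := x)
    (pow_ne_zero 2 hx)

lemma integrable_sq {u : ℝ → ℝ} (hu : Continuous u) (hc : HasCompactSupport u) :
    Integrable fun r => (u r) ^ 2 := by
  have h1 : Continuous fun r => (u r) ^ 2 := hu.pow 2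
  exact h1.integrable_of_hasCompactSupport
    (HasCompactSupport.intro hc fun x hx => by simp [image_eq_zero_of_notMem_tsupport hx])

/-- A pointwise lower bound on the potential bounds every Rayleigh quotient from below. -/
lemma le_rayleigh {V u : ℝ → ℝ} {E r₂ h : ℝ} (hV : ContinuousOn V (Ioi 0))
    (hE : ∀ r ∈ Ioo 0 r₂, E ≤ V r)
    (hu : ContDiff ℝ (⊤ : ℕ∞) u) (hc : HasCompactSupport u) (hsupp : tsupport u ⊆ Ioo 0 r₂)
    (h0 : u ≠ 0) :
    E ≤ (∫ r in Ioo (0:ℝ) r₂, (h ^ 2 * (deriv u r) ^ 2 + V r * (u r) ^ 2)) /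
      ∫ r in Ioo (0:ℝ) r₂, (u r) ^ 2 := by
  have hint := integrable_sq hu.continuous hc
  have hpos : 0 < ∫ r in Ioo (0:ℝ) r₂, (u r) ^ 2 := by
    rw [setIntegral_eq_of_tsupport_subset hsupp
      fun x hx => by simp [image_eq_zero_of_notMem_tsupport hx]]
    exact integral_sq_pos hu.continuous hc h0
  rw [le_div_iff₀ hpos, ← integral_const_mul]
  have hl : IntegrableOn (fun r => E * (u r) ^ 2) (Ioo 0 r₂) := (hint.const_mul E).integrableOn
  have hr : IntegrableOn (fun r => h ^ 2 * (deriv u r) ^ 2 + V r * (u r) ^ 2) (Ioo 0 r₂) :=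
    (integrable_energy hV hu hc hsupp).integrableOn
  refine setIntegral_mono_on hl hr measurableSet_Ioo fun r hr => ?_
  have h1 := mul_le_mul_of_nonneg_right (hE r hr) (sq_nonneg (u r))
  have h2 : 0 ≤ h ^ 2 * (deriv u r) ^ 2 := by positivity
  linarith

/-- Bumps concentrated at scale `√h` around a point where `V ≤ E + K (r - r₁)²` have Rayleigh
quotient at most `E + C h`. -/
lemma exists_trial {V : ℝ → ℝ} {E K δ r₁ r₂ : ℝ} (hV : ContinuousOn V (Ioi 0)) (hδ : 0 < δ)
    (hK : 0 ≤ K) (hr₁ : r₁ ∈ Ioo 0 r₂) (hbd : ∀ r, |r - r₁| ≤ δ → V r ≤ E + K * (r - r₁) ^ 2) :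
    ∃ C > (0:ℝ), ∀ h ∈ Ioc (0:ℝ) 1, ∃ u : ℝ → ℝ, ContDiff ℝ (⊤ : ℕ∞) u ∧ HasCompactSupport u ∧
      tsupport u ⊆ Ioo 0 r₂ ∧ u ≠ 0 ∧
      (∫ r in Ioo (0:ℝ) r₂, (h ^ 2 * (deriv u r) ^ 2 + V r * (u r) ^ 2)) /
        (∫ r in Ioo (0:ℝ) r₂, (u r) ^ 2) ≤ E + C * h := by
  obtain ⟨η, hη, hηlt⟩ := exists_between (show 0 < min δ (min r₁ (r₂ - r₁)) from
    lt_min hδ (lt_min hr₁.1 (sub_pos.2 hr₁.2)))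
  obtain ⟨hηδ, hη'⟩ := lt_min_iff.1 hηlt
  obtain ⟨hη1, hη2⟩ := lt_min_iff.1 hη'
  let b : ContDiffBump (0:ℝ) := ⟨η / 2, η, by positivity, by linarith⟩
  obtain ⟨φ, hφ⟩ : ∃ φ : ℝ → ℝ, φ = b := ⟨_, rfl⟩
  have hφs : ContDiff ℝ (⊤ : ℕ∞) φ := hφ ▸ b.contDiff
  have hφc : HasCompactSupport φ := hφ ▸ b.hasCompactSupport
  have hφt : tsupport φ = Metric.closedBall 0 η := hφ ▸ b.tsupport_eq
  have hφ0 : φ 0 ≠ 0 := by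
    rw [hφ]; exact (b.pos_of_mem_ball (Metric.mem_ball_self hη)).ne'
  have hφd : Continuous (deriv φ) := hφs.continuous_deriv (by norm_num)
  have hA := integral_sq_pos hφs.continuous hφc (fun h => hφ0 (congrFun h 0))
  have hi1 := integrable_sq hφs.continuous hφc
  have hi2 : Integrable fun y => (deriv φ y) ^ 2 + K * y ^ 2 * (φ y) ^ 2 :=
    Continuous.integrable_of_hasCompactSupport
      ((hφd.pow 2).add ((continuous_const.mul (continuous_id.pow 2)).mul (hφs.continuous.pow 2)))
      (HasCompactSupport.intro hφc fun x hx => by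
        rw [image_eq_zero_of_notMem_tsupport hx,
          image_eq_zero_of_notMem_tsupport fun h' => hx (tsupport_deriv_subset h')]
        simp)
  set A := ∫ y, (φ y) ^ 2 with hAdef
  set B := ∫ y, ((deriv φ y) ^ 2 + K * y ^ 2 * (φ y) ^ 2) with hBdef
  have hB : 0 ≤ B := integral_nonneg fun y => by positivity
  refine ⟨B / A + 1, by positivity, fun h hh => ?_⟩
  obtain ⟨s, hs⟩ : ∃ s, s = √h := ⟨_, rfl⟩
  have hh0 : 0 < h := hh.1
  have hs0 : 0 < s := hs ▸ Real.sqrt_pos.2 hh.1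
  have hs1 : s ≤ 1 := hs ▸ Real.sqrt_le_one.2 hh.2
  have hs2 : s ^ 2 = h := hs ▸ Real.sq_sqrt hh.1.le
  obtain ⟨u, hu⟩ : ∃ u : ℝ → ℝ, u = fun r => φ ((r - r₁) / s) := ⟨_, rfl⟩
  have hus : ContDiff ℝ (⊤ : ℕ∞) u :=
    hu ▸ hφs.comp ((contDiff_id.sub contDiff_const).div_const s)
  have hsub : tsupport u ⊆ Metric.closedBall r₁ (s * η) := by
    refine closure_minimal (fun r hr => ?_) Metric.isClosed_closedBall
    have hr' : (r - r₁) / s ∈ tsupport φ := subset_tsupport φ (by simpa [hu] using hr)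
    rw [hφt, Metric.mem_closedBall, dist_zero_right, Real.norm_eq_abs, abs_div, abs_of_pos hs0,
      div_le_iff₀ hs0] at hr'
    rw [Metric.mem_closedBall, Real.dist_eq]; linarith
  have hsub' : ∀ r ∈ tsupport u, |r - r₁| ≤ η := fun r hr => by
    have := Metric.mem_closedBall.1 (hsub hr)
    rw [Real.dist_eq] at this
    nlinarith
  have huc : HasCompactSupport u :=
    (isCompact_closedBall r₁ (s * η)).of_isClosed_subset (isClosed_tsupport u) hsub
  have hsupp : tsupport u ⊆ Ioo 0 r₂ := fun r hr => by
    have := abs_le.1 (hsub' r hr)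
    constructor <;> linarith
  have hud : ∀ r, deriv u r = deriv φ ((r - r₁) / s) / s := fun r => by
    have h1 : HasDerivAt (fun r : ℝ => (r - r₁) / s) (1 / s) r :=
      ((hasDerivAt_id r).sub_const r₁).div_const s
    have h2 := (hφs.differentiable (by norm_num) ((r - r₁) / s)).hasDerivAt.comp r h1
    rw [hu, show (fun r => φ ((r - r₁) / s)) = φ ∘ fun r => (r - r₁) / s from rfl, h2.deriv]
    ring
  have hscale : ∀ g : ℝ → ℝ, ∫ r, g ((r - r₁) / s) = s * ∫ y, g y := fun g => by
    rw [integral_sub_right_eq_self (fun r => g (r / s)) r₁, Measure.integral_comp_div,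
      abs_of_pos hs0, smul_eq_mul]
  refine ⟨u, hus, huc, hsupp, fun h0 => hφ0 (by simpa [hu] using congrFun h0 r₁), ?_⟩
  rw [setIntegral_eq_of_tsupport_subset (f := fun r => (u r) ^ 2) hsupp
      (fun x hx => by simp [image_eq_zero_of_notMem_tsupport hx]),
    setIntegral_eq_of_tsupport_subset hsupp (fun x hx => by
      rw [image_eq_zero_of_notMem_tsupport hx,
        image_eq_zero_of_notMem_tsupport fun h' => hx (tsupport_deriv_subset h')]
      simp)]
  have hden : ∫ r, (u r) ^ 2 = s * A := by
    rw [hu]; exact hscale fun y => (φ y) ^ 2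
  have hnum : ∫ r, (h ^ 2 * (deriv u r) ^ 2 + V r * (u r) ^ 2) ≤ s * (E * A + h * B) := by
    have h3 : ∫ y, (E * (φ y) ^ 2 + h * ((deriv φ y) ^ 2 + K * y ^ 2 * (φ y) ^ 2))
        = E * A + h * B := by
      rw [integral_add (hi1.const_mul E) (hi2.const_mul h), integral_const_mul, integral_const_mul]
    rw [← h3, ← hscale]
    refine integral_mono (integrable_energy hV hus huc hsupp)
      ((((hi1.const_mul E).add (hi2.const_mul h)).comp_div hs0.ne').comp_sub_right r₁)
      fun r => ?_
    have hpot : V r * (u r) ^ 2 ≤ (E + K * (r - r₁) ^ 2) * (u r) ^ 2 := by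
      by_cases hr : r ∈ tsupport u
      · exact mul_le_mul_of_nonneg_right (hbd r ((hsub' r hr).trans hηδ.le)) (sq_nonneg _)
      · simp [image_eq_zero_of_notMem_tsupport hr]
    have hur : u r = φ ((r - r₁) / s) := by rw [hu]
    have he : (r - r₁) = s * ((r - r₁) / s) := by field_simp
    simp only [hud]
    rw [hur] at hpot ⊢
    set y := (r - r₁) / s
    rw [he, mul_pow, hs2] at hpot
    have hk : h ^ 2 * (deriv φ y / s) ^ 2 = h * (deriv φ y) ^ 2 := by
      rw [div_pow, hs2]; field_simp
    rw [hk]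
    linarith
  rw [hden, div_le_iff₀ (by positivity)]
  refine hnum.trans ?_
  have h4 : (E + (B / A + 1) * h) * (s * A) = s * (E * A + h * B) + h * s * A := by
    field_simp
    ring
  rw [h4]
  have : 0 < h * s * A := by positivity
  linarith

/-- The bottom `λ(h)` of the Dirichlet spectrum of `−h²∂_r² + V_{M₀}` on `(0,r₂)`,
expressed as the infimum of Rayleigh quotients over nonzero test functions in
`C_c^∞((0,r₂))`, satisfies `E₀ ≤ λ(h) ≤ E₀ + C h` for all `h ∈ (0,1]`. -/
theorem dirichlet_bottom_eigenvalue
    (V₀ : ℝ → ℝ)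
    (hext : ∃ W : ℝ → ℝ, ContDiffOn ℝ 3 W (Set.Ici 0) ∧ ∀ r > 0, W r = r ^ 2 * V₀ r)
    (hbdd : ∃ b : ℝ, ∀ r > 0, b ≤ V₀ r)
    (C_V : ℝ)
    (hCV : ∀ k : ℕ, k ≤ 3 → ∀ r > 0, |r ^ (2 + k) * iteratedDeriv k V₀ r| ≤ C_V)
    (E₀ : ℝ) (hE₀ : 0 < E₀)
    (M₀ : ℝ)
    (hM₀ : IsLUB {m : ℝ | 0 ≤ m ∧ {r : ℝ | 0 < r ∧ V₀ r + m / r ^ 2 = E₀}.Nontrivial} M₀)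
    (Z : Set ℝ) (hZ : Z = {r : ℝ | 0 < r ∧ V₀ r + M₀ / r ^ 2 = E₀})
    (hZnt : Z.Nontrivial)
    (r₂ : ℝ) (hr₂ : IsGreatest Z r₂)
    (hmono : ∀ r ≥ r₂, deriv (fun s => V₀ s + M₀ / s ^ 2) r < 0)
    (r₁ : ℝ) (hr₁ : IsGreatest (Z \ {r₂}) r₁)
    (lam : ℝ → ℝ)
    (hlam : ∀ h : ℝ, lam h = sInf {q : ℝ | ∃ u : ℝ → ℝ,
      ContDiff ℝ (⊤ : ℕ∞) u ∧ HasCompactSupport u ∧ tsupport u ⊆ Set.Ioo 0 r₂ ∧ u ≠ 0 ∧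
      q = (∫ r in Set.Ioo (0:ℝ) r₂,
            (h ^ 2 * (deriv u r) ^ 2 + (V₀ r + M₀ / r ^ 2) * (u r) ^ 2)) /
          ∫ r in Set.Ioo (0:ℝ) r₂, (u r) ^ 2}) :
    ∃ C > (0:ℝ), ∀ h ∈ Set.Ioc (0:ℝ) 1, E₀ ≤ lam h ∧ lam h ≤ E₀ + C * h := by
  obtain ⟨W, hW, hWV⟩ := hext
  have hV₀ : ContDiffOn ℝ 2 V₀ (Ioi 0) := by
    have h1 : ContDiffOn ℝ 2 (fun r => W r / r ^ 2) (Ioi 0) :=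
      ((hW.of_le (by norm_num)).mono Ioi_subset_Ici_self).div (contDiffOn_id.pow 2)
        fun x hx => pow_ne_zero 2 (ne_of_gt hx)
    refine h1.congr fun x hx => ?_
    have hx0 : x ≠ 0 := ne_of_gt hx
    rw [hWV x hx]; field_simp
  have hV : ContDiffOn ℝ 2 (fun s => V₀ s + M₀ / s ^ 2) (Ioi 0) :=
    hV₀.add (contDiffOn_const.div (contDiffOn_id.pow 2) fun x hx => pow_ne_zero 2 (ne_of_gt hx))
  subst hZ
  obtain ⟨hr20, hr2E⟩ := hr₂.1
  obtain ⟨⟨hr10, hr1E⟩, hr12⟩ := hr₁.1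
  have hlt : r₁ < r₂ := lt_of_le_of_ne (hr₂.2 hr₁.1.1) hr12
  have hanti : StrictAntiOn (fun s => V₀ s + M₀ / s ^ 2) (Ici r₂) :=
    strictAntiOn_of_deriv_neg (convex_Ici r₂)
      (hV.continuousOn.mono fun y hy => hr20.trans_le hy)
      fun x hx => hmono x (interior_subset hx)
  have hER : V₀ (r₂ + 1) + M₀ / (r₂ + 1) ^ 2 < E₀ := by
    have := hanti (mem_Ici.2 le_rfl) (mem_Ici.2 (by linarith : r₂ ≤ r₂ + 1)) (by linarith)
    simp only at this; linarith
  have hge : ∀ r ∈ Ioo 0 r₂, E₀ ≤ V₀ r + M₀ / r ^ 2 := fun r hr =>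
    le_of_isLUB hV₀.continuousOn hM₀ hr20 hr2E (lt_add_one r₂) hER hr
  have hmin : IsLocalMin (fun s => V₀ s + M₀ / s ^ 2) r₁ := by
    filter_upwards [Ioo_mem_nhds hr10 hlt] with r hr
    rw [hr1E]; exact hge r hr
  obtain ⟨K, hK, δ, hδ, hbd⟩ := quadratic_bound isOpen_Ioi hV hr10 hmin.deriv_eq_zero
  simp only [hr1E] at hbd
  obtain ⟨C, hC, htrial⟩ := exists_trial hV.continuousOn hδ hK ⟨hr10, hlt⟩ hbd
  refine ⟨C, hC, fun h hh => ?_⟩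
  obtain ⟨u, hu, huc, husupp, hu0, hle⟩ := htrial h hh
  rw [hlam h]
  constructor
  · refine le_csInf ⟨_, u, hu, huc, husupp, hu0, rfl⟩ ?_
    rintro q ⟨v, hv, hvc, hvsupp, hv0, rfl⟩
    exact le_rayleigh hV.continuousOn hge hv hvc hvsupp hv0
  · refine le_trans (csInf_le ⟨E₀, ?_⟩ ⟨u, hu, huc, husupp, hu0, rfl⟩) hle
    rintro q ⟨v, hv, hvc, hvsupp, hv0, rfl⟩
    exact le_rayleigh hV.continuousOn hge hv hvc hvsupp hv0
end

section
/- Assume additionally M₀ > 0 and sup_{r ∈ (0,r₂)} V₀(r) < E₀. For κ > 0 define λ(κ) = inf over nonzero u ∈ C_c^∞((0,r₂)) of the weighted Rayleigh quotient [∫₀^{r₂} ( u'(r)² + κ r^{-2} u(r)² ) dr] / [∫₀^{r₂} u(r)² (E₀ − V₀(r)) dr]. Then there is C > 0 such that for every κ ≥ 1: κ ≤ M₀ λ(κ) ≤ κ + C √λ(κ). -/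
open Set MeasureTheory Filter

/-!
Put `f r = r² (E₀ - V₀ r)`, so that `V_m r = E₀` means `f r = m`.

Lower bound: `f ≤ M₀` on `(0, r₂)` (`sq_mul_le_of_isLUB`). Indeed `f r₂ = M₀` and `f > M₀` to the
right of `r₂`, so if `f` exceeded `M₀` somewhere to the left of `r₂`, a level slightly above `M₀`
would be attained on both sides of `r₂`, against the choice of `M₀`. Hence
`E₀ - V₀ ≤ M₀ / r²` and every Rayleigh quotient is at least `κ / M₀`.

Upper bound: `f` has an interior maximum `M₀` at `r₁`, so `M₀ - f r ≤ A (r - r₁)²` near `r₁`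
(`exists_sub_le_mul_sq`). Testing with `u r = b ((r - r₁) / h)` for a fixed bump `b` and
`h = δ κ^{-1/4}` gives a quotient `q` with
`M₀ q - κ ≲ h⁻² + κ h² ≲ √κ`, and `√κ ≤ √M₀ √λ` by the lower bound.
-/

/-! ### The profile `r² (E₀ - V₀)` and its maximum -/

/-- A level above `M₀` cannot be attained left of `r₂`: by the intermediate value theorem it
would be attained on the right of `r₂` as well. -/
lemma sq_mul_le_of_isLUB {V₀ : ℝ → ℝ} {E₀ M₀ r₂ : ℝ} (hV : ContinuousOn V₀ (Ioi 0))
    (hM₀ : IsLUB {m : ℝ | 0 ≤ m ∧ {r : ℝ | 0 < r ∧ V₀ r + m / r ^ 2 = E₀}.Nontrivial} M₀)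
    (hM₀pos : 0 < M₀) (hr₂pos : 0 < r₂) (hr₂ : V₀ r₂ + M₀ / r₂ ^ 2 = E₀)
    (hmono : ∀ r ≥ r₂, deriv (fun s => V₀ s + M₀ / s ^ 2) r < 0)
    {a : ℝ} (ha : a ∈ Ioo (0 : ℝ) r₂) : a ^ 2 * (E₀ - V₀ a) ≤ M₀ := by
  by_contra! hlt
  set f : ℝ → ℝ := fun r => r ^ 2 * (E₀ - V₀ r) with hf
  have hfc : ContinuousOn f (Ioi 0) := by fun_prop
  have hanti : StrictAntiOn (fun s => V₀ s + M₀ / s ^ 2) (Ici r₂) := by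
    apply strictAntiOn_of_deriv_neg (convex_Ici _)
    · refine (hV.mono fun x hx => lt_of_lt_of_le hr₂pos hx).add
        (continuousOn_const.div (by fun_prop) fun x hx => ?_)
      have : 0 < x := lt_of_lt_of_le hr₂pos hx
      positivity
    · intro x hx
      rw [interior_Ici] at hx
      exact hmono x hx.le
  have hf2 : f r₂ = M₀ := by
    simp only [hf]
    rw [← hr₂]
    field_simp
    ring
  have hfb : M₀ < f (r₂ + 1) := by
    have h := hanti (a := r₂) (b := r₂ + 1) (by simp) (by simp) (by linarith)
    simp only [hr₂] at h
    have hp : 0 < r₂ + 1 := by linarith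
    have h' : M₀ / (r₂ + 1) ^ 2 < E₀ - V₀ (r₂ + 1) := by linarith
    rw [div_lt_iff₀ (by positivity)] at h'
    simp only [hf]; linarith
  obtain ⟨m, hm1, hm2⟩ := exists_between (lt_min hlt hfb)
  have hma : m < f a := hm2.trans_le (min_le_left _ _)
  have hmb : m < f (r₂ + 1) := hm2.trans_le (min_le_right _ _)
  obtain ⟨x, hx, hxm⟩ := intermediate_value_Ioo' (f := f) ha.2.le
    (hfc.mono fun y hy => lt_of_lt_of_le ha.1 hy.1) (show m ∈ Ioo (f r₂) (f a) by
      rw [hf2]; exact ⟨hm1, hma⟩)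
  obtain ⟨y, hy, hym⟩ := intermediate_value_Ioo (f := f) (show r₂ ≤ r₂ + 1 by linarith)
    (hfc.mono fun y hy => lt_of_lt_of_le hr₂pos hy.1)
    (show m ∈ Ioo (f r₂) (f (r₂ + 1)) by rw [hf2]; exact ⟨hm1, hmb⟩)
  have key : ∀ z, 0 < z → f z = m → V₀ z + m / z ^ 2 = E₀ := by
    intro z hz h
    rw [← h]
    simp only [hf]
    field_simp
    ring
  have hx0 : 0 < x := ha.1.trans hx.1
  have hy0 : 0 < y := hr₂pos.trans hy.1
  have hmem := hM₀.1 (show m ∈ {m : ℝ | 0 ≤ m ∧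
      {r : ℝ | 0 < r ∧ V₀ r + m / r ^ 2 = E₀}.Nontrivial} from
    ⟨by linarith, x, ⟨hx0, key x hx0 hxm⟩, y, ⟨hy0, key y hy0 hym⟩, (hx.2.trans hy.1).ne⟩)
  linarith

/-- A function that is `C²` at a local maximum lies above a downward parabola there: its
derivative vanishes at the point and is `O(r - a)`, and the mean value inequality applies. -/
lemma exists_sub_le_mul_sq {f : ℝ → ℝ} {a : ℝ} (hf : ContDiffAt ℝ 2 f a) (hmax : IsLocalMax f a) :
    ∃ A > 0, ∃ ε > 0, ∀ r, |r - a| ≤ ε → f a - f r ≤ A * (r - a) ^ 2 := by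
  have hd : ∀ᶠ x in nhds a, DifferentiableAt ℝ f x := by
    filter_upwards [hf.eventually (by simp)] with x hx
    exact hx.differentiableAt (by norm_num)
  have hd1 : DifferentiableAt ℝ (deriv f) a := by
    have : ContDiffAt ℝ 1 (deriv f) a := hf.derivWithin (by norm_num)
    exact this.differentiableAt (by norm_num)
  have h0 : deriv f a = 0 := hmax.deriv_eq_zero
  obtain ⟨A, hA, hO⟩ := hd1.isBigO_sub.exists_pos
  obtain ⟨ε, hε, hball⟩ := Metric.eventually_nhds_iff.1 (hd.and hO.bound)
  refine ⟨A, hA, ε / 2, by positivity, fun r hr => ?_⟩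
  have hb : ∀ x ∈ Metric.closedBall a |r - a|, DifferentiableAt ℝ f x ∧
      ‖deriv f x‖ ≤ A * |r - a| := by
    intro x hx
    have hx' : dist x a ≤ |r - a| := hx
    obtain ⟨h1, h2⟩ := hball (show dist x a < ε by linarith)
    refine ⟨h1, ?_⟩
    rw [h0, sub_zero] at h2
    refine h2.trans ?_
    rw [Real.norm_eq_abs, ← Real.dist_eq]
    gcongr
  have := (convex_closedBall a |r - a|).norm_image_sub_le_of_norm_deriv_le
    (fun x hx => (hb x hx).1) (fun x hx => (hb x hx).2)
    (show r ∈ Metric.closedBall a |r - a| by simp [Real.dist_eq])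
    (show a ∈ Metric.closedBall a |r - a| by simp)
  rw [Real.norm_eq_abs, Real.norm_eq_abs, abs_sub_comm a r, mul_assoc, ← sq, sq_abs] at this
  exact (le_abs_self _).trans this

/-! ### Integrability of test functions -/

/-- A weight that is only controlled on an open set containing the support of `u` is harmless. -/
lemma integrable_sq_mul {u g : ℝ → ℝ} {U : Set ℝ} (hU : IsOpen U) (hu : Continuous u)
    (hc : HasCompactSupport u) (hs : tsupport u ⊆ U) (hg : ContinuousOn g U) :
    Integrable (fun r => u r ^ 2 * g r) := by
  have hsub : Function.support (fun r => u r ^ 2 * g r) ⊆ Function.support u := by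
    intro x hx h
    exact hx (by simp [h])
  refine Continuous.integrable_of_hasCompactSupport ?_ (hc.mono hsub)
  exact ContinuousOn.continuous_of_tsupport_subset
    ((hu.continuousOn.pow 2).mul hg) hU ((closure_mono hsub).trans hs)

/-! ### The two-sided bound -/

set_option maxHeartbeats 1000000 in
theorem weighted_rayleigh_quotient_bounds
    (V₀ : ℝ → ℝ)
    (hext : ∃ W : ℝ → ℝ, ContDiffOn ℝ 3 W (Set.Ici 0) ∧ ∀ r > 0, W r = r ^ 2 * V₀ r)
    (hbdd : ∃ b : ℝ, ∀ r > 0, b ≤ V₀ r)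
    (C_V : ℝ)
    (hCV : ∀ k : ℕ, k ≤ 3 → ∀ r > 0, |r ^ (2 + k) * iteratedDeriv k V₀ r| ≤ C_V)
    (E₀ : ℝ) (hE₀ : 0 < E₀)
    (M₀ : ℝ)
    (hM₀ : IsLUB {m : ℝ | 0 ≤ m ∧ {r : ℝ | 0 < r ∧ V₀ r + m / r ^ 2 = E₀}.Nontrivial} M₀)
    (Z : Set ℝ) (hZ : Z = {r : ℝ | 0 < r ∧ V₀ r + M₀ / r ^ 2 = E₀})
    (hZnt : Z.Nontrivial)
    (r₂ : ℝ) (hr₂ : IsGreatest Z r₂)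
    (hmono : ∀ r ≥ r₂, deriv (fun s => V₀ s + M₀ / s ^ 2) r < 0)
    (r₁ : ℝ) (hr₁ : IsGreatest (Z \ {r₂}) r₁)
    (hM₀pos : 0 < M₀)
    (hVsup : ∃ s : ℝ, s < E₀ ∧ ∀ r ∈ Set.Ioo (0:ℝ) r₂, V₀ r ≤ s)
    (lam : ℝ → ℝ)
    (hlam : ∀ κ : ℝ, 0 < κ → lam κ = sInf {q : ℝ | ∃ u : ℝ → ℝ,
      ContDiff ℝ (⊤ : ℕ∞) u ∧ HasCompactSupport u ∧ tsupport u ⊆ Set.Ioo 0 r₂ ∧ u ≠ 0 ∧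
      q = (∫ r in Set.Ioo (0:ℝ) r₂,
            ((deriv u r) ^ 2 + κ / r ^ 2 * (u r) ^ 2)) /
          ∫ r in Set.Ioo (0:ℝ) r₂, (u r) ^ 2 * (E₀ - V₀ r)}) :
    ∃ C > (0:ℝ), ∀ κ ≥ (1:ℝ),
      κ ≤ M₀ * lam κ ∧ M₀ * lam κ ≤ κ + C * Real.sqrt (lam κ) := by
  obtain ⟨W, hWd, hW⟩ := hext
  obtain ⟨s, hsE, hs⟩ := hVsup
  have hr₂Z := hr₂.1
  have hr₁Z := hr₁.1.1
  have hr12 : r₁ < r₂ := lt_of_le_of_ne (hr₂.2 hr₁Z) hr₁.1.2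
  rw [hZ] at hr₂Z hr₁Z
  obtain ⟨hr₂pos, hr₂e⟩ := hr₂Z
  obtain ⟨hr₁pos, hr₁e⟩ := hr₁Z
  have hV : ContinuousOn V₀ (Ioi 0) := by
    have : ContinuousOn (fun r => W r / r ^ 2) (Ioi 0) :=
      (hWd.continuousOn.mono Ioi_subset_Ici_self).div (by fun_prop)
        (fun x hx => by have : 0 < x := hx; positivity)
    refine this.congr fun x hx => ?_
    have hx' : 0 < x := hx
    simp only [hW x hx']
    field_simp
  have hle : ∀ r ∈ Ioo (0 : ℝ) r₂, r ^ 2 * (E₀ - V₀ r) ≤ M₀ := fun r hr =>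
    sq_mul_le_of_isLUB hV hM₀ hM₀pos hr₂pos hr₂e hmono hr
  have hIoo : Ioo (0 : ℝ) r₂ ⊆ Ioi 0 := fun x hx => hx.1
  have hinv : ContinuousOn (fun r : ℝ => 1 / r ^ 2) (Ioo 0 r₂) :=
    continuousOn_const.div (by fun_prop) (fun x hx => by have : 0 < x := hx.1; positivity)
  have hEV : ContinuousOn (fun r => E₀ - V₀ r) (Ioo 0 r₂) :=
    continuousOn_const.sub (hV.mono hIoo)
  -- Integrability, expansion of the numerator, and positivity of the denominator, for test functions
  have basic : ∀ u : ℝ → ℝ, ContDiff ℝ (⊤ : ℕ∞) u → HasCompactSupport u →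
      tsupport u ⊆ Ioo 0 r₂ → u ≠ 0 →
      Integrable (fun r => u r ^ 2 * (E₀ - V₀ r)) ∧ Integrable (fun r => u r ^ 2 * (1 / r ^ 2)) ∧
      Integrable (fun r => u r ^ 2) ∧
      (∀ κ : ℝ, ∫ r in Ioo (0:ℝ) r₂, ((deriv u r) ^ 2 + κ / r ^ 2 * (u r) ^ 2) =
        (∫ r in Ioo (0:ℝ) r₂, (deriv u r) ^ 2) +
          κ * ∫ r in Ioo (0:ℝ) r₂, u r ^ 2 * (1 / r ^ 2)) ∧
      0 < (∫ r in Ioo (0:ℝ) r₂, u r ^ 2) ∧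
      (E₀ - s) * (∫ r in Ioo (0:ℝ) r₂, u r ^ 2) ≤
        ∫ r in Ioo (0:ℝ) r₂, (u r) ^ 2 * (E₀ - V₀ r) := by
    intro u hu hc hsu hne
    have i1 := integrable_sq_mul isOpen_Ioo hu.continuous hc hsu hEV
    have i2 := integrable_sq_mul isOpen_Ioo hu.continuous hc hsu hinv
    have i3 : Integrable (fun r => u r ^ 2) := by
      simpa using integrable_sq_mul isOpen_Ioo hu.continuous hc hsu
        (continuousOn_const (c := (1 : ℝ)))
    have i4 : Integrable (fun r => deriv u r ^ 2) := by
      simpa using integrable_sq_mul isOpen_univ (hu.continuous_deriv (by simp)) hc.deriv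
        (subset_univ _) (continuousOn_const (c := (1 : ℝ)))
    refine ⟨i1, i2, i3, fun κ => ?_, ?_, ?_⟩
    · rw [← integral_const_mul, ← integral_add i4.integrableOn (i2.const_mul κ).integrableOn]
      congr 1
      ext r
      ring
    · rw [setIntegral_eq_integral_of_forall_compl_eq_zero]
      · obtain ⟨x, hx⟩ := Function.ne_iff.1 hne
        have hc2 : HasCompactSupport (fun r => u r ^ 2) :=
          hc.mono fun y hy h => hy (by simp [h])
        exact Continuous.integral_pos_of_hasCompactSupport_nonneg_nonzero
          (hu.continuous.pow 2) hc2 (fun y => sq_nonneg _) (x := x) (pow_ne_zero 2 hx)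
      · intro x hx
        rw [image_eq_zero_of_notMem_tsupport fun h => hx (hsu h)]
        simp
    · rw [← integral_const_mul]
      refine setIntegral_mono_on (i3.const_mul _).integrableOn i1.integrableOn
        measurableSet_Ioo fun r hr => ?_
      have := hs r hr
      nlinarith [sq_nonneg (u r)]
  have lower : ∀ κ : ℝ, 0 < κ → ∀ q ∈ {q : ℝ | ∃ u : ℝ → ℝ,
      ContDiff ℝ (⊤ : ℕ∞) u ∧ HasCompactSupport u ∧ tsupport u ⊆ Set.Ioo 0 r₂ ∧ u ≠ 0 ∧
      q = (∫ r in Set.Ioo (0:ℝ) r₂,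
            ((deriv u r) ^ 2 + κ / r ^ 2 * (u r) ^ 2)) /
          ∫ r in Set.Ioo (0:ℝ) r₂, (u r) ^ 2 * (E₀ - V₀ r)}, κ / M₀ ≤ q := by
    rintro κ hκ q ⟨u, hu, hc, hsu, hne, rfl⟩
    obtain ⟨i1, i2, i3, hN, hI, hD⟩ := basic u hu hc hsu hne
    have hDpos := lt_of_lt_of_le (mul_pos (sub_pos.2 hsE) hI) hD
    rw [hN, div_le_div_iff₀ hM₀pos hDpos]
    have h1 : ∫ r in Ioo (0:ℝ) r₂, (u r) ^ 2 * (E₀ - V₀ r) ≤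
        M₀ * ∫ r in Ioo (0:ℝ) r₂, u r ^ 2 * (1 / r ^ 2) := by
      rw [← integral_const_mul]
      refine setIntegral_mono_on i1.integrableOn (i2.const_mul _).integrableOn
        measurableSet_Ioo fun r hr => ?_
      have h2 := hle r hr
      have h3 : 0 < r ^ 2 := by have := hr.1; positivity
      have h4 : E₀ - V₀ r ≤ M₀ * (1 / r ^ 2) := by
        rw [mul_one_div, le_div_iff₀ h3]; linarith
      nlinarith [sq_nonneg (u r)]
    have h2 : 0 ≤ ∫ r in Ioo (0:ℝ) r₂, (deriv u r) ^ 2 :=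
      integral_nonneg fun _ => sq_nonneg _
    nlinarith [mul_le_mul_of_nonneg_left h1 hκ.le, mul_nonneg h2 hM₀pos.le]
  -- The quadratic lower bound on `r² (E₀ - V₀)` at its maximum `r₁`
  obtain ⟨A, hA, ε, hε, hquad⟩ : ∃ A > 0, ∃ ε > 0, ∀ r, 0 < r → |r - r₁| ≤ ε →
      M₀ - r ^ 2 * (E₀ - V₀ r) ≤ A * (r - r₁) ^ 2 := by
    have hWat : ContDiffAt ℝ 2 W r₁ :=
      ((hWd r₁ hr₁pos.le).contDiffAt (Ici_mem_nhds hr₁pos)).of_le (by norm_num)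
    have hval : r₁ ^ 2 * E₀ - W r₁ = M₀ := by
      rw [hW r₁ hr₁pos, ← hr₁e]
      field_simp
      ring
    have hmax : IsLocalMax (fun r => r ^ 2 * E₀ - W r) r₁ := by
      filter_upwards [Ioo_mem_nhds hr₁pos hr12] with r hr
      rw [hval, hW r hr.1]
      linarith [hle r hr]
    obtain ⟨A, hA, ε, hε, h⟩ := exists_sub_le_mul_sq
      (f := fun r => r ^ 2 * E₀ - W r) (by fun_prop) hmax
    refine ⟨A, hA, ε, hε, fun r hr hra => ?_⟩
    have := h r hra
    simp only [hval, hW r hr] at this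
    linarith
  set δ : ℝ := min ε (min (r₁ / 2) ((r₂ - r₁) / 2)) with hδ
  have hδpos : 0 < δ := by
    refine lt_min hε (lt_min ?_ ?_) <;> linarith
  have hδε : δ ≤ ε := min_le_left _ _
  have hδ1 : δ ≤ r₁ / 2 := (min_le_right _ _).trans (min_le_left _ _)
  have hδ2 : δ ≤ (r₂ - r₁) / 2 := (min_le_right _ _).trans (min_le_right _ _)
  let b : ContDiffBump (0 : ℝ) := ⟨1 / 2, 1, by norm_num, by norm_num⟩
  set I₀ : ℝ := ∫ x, b x ^ 2 with hI₀
  set J₀ : ℝ := ∫ x, deriv b x ^ 2 with hJ₀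
  have hJ₀nn : 0 ≤ J₀ := integral_nonneg fun _ => sq_nonneg _
  set A' : ℝ := A * (4 / r₁ ^ 2) with hA'
  have hA'pos : 0 < A' := by positivity
  set K : ℝ := (M₀ * J₀ / I₀ / δ ^ 2 + A' * δ ^ 2) / (E₀ - s) with hK
  have upper : ∀ κ : ℝ, 1 ≤ κ → 0 < I₀ ∧ ∃ q ∈ {q : ℝ | ∃ u : ℝ → ℝ,
      ContDiff ℝ (⊤ : ℕ∞) u ∧ HasCompactSupport u ∧ tsupport u ⊆ Set.Ioo 0 r₂ ∧ u ≠ 0 ∧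
      q = (∫ r in Set.Ioo (0:ℝ) r₂,
            ((deriv u r) ^ 2 + κ / r ^ 2 * (u r) ^ 2)) /
          ∫ r in Set.Ioo (0:ℝ) r₂, (u r) ^ 2 * (E₀ - V₀ r)},
        M₀ * q ≤ κ + K * √κ := by
    intro κ hκ
    have hκ0 : 0 < κ := by linarith
    set t : ℝ := √√κ with ht
    have ht2 : t ^ 2 = √κ := Real.sq_sqrt (Real.sqrt_nonneg _)
    have ht1 : 1 ≤ t := by
      rw [ht, Real.one_le_sqrt, Real.one_le_sqrt]; exact hκ
    have ht4 : (t ^ 2) ^ 2 = κ := by rw [ht2]; exact Real.sq_sqrt hκ0.le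
    set h : ℝ := δ / t with hh
    have hpos : 0 < h := by positivity
    have hhδ : h ≤ δ := div_le_self hδpos.le ht1
    set u : ℝ → ℝ := fun r => b ((r - r₁) / h) with hu_def
    have hu : ContDiff ℝ (⊤ : ℕ∞) u := by
      have : ContDiff ℝ (⊤ : ℕ∞) (fun r : ℝ => (r - r₁) / h) := by fun_prop
      exact b.contDiff.comp this
    have hzero : ∀ r, h < |r - r₁| → u r = 0 := by
      intro r hr
      refine b.zero_of_le_dist ?_
      rw [dist_zero_right, Real.norm_eq_abs, abs_div, abs_of_pos hpos]
      exact (one_le_div hpos).2 hr.le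
    have htsup : tsupport u ⊆ Metric.closedBall r₁ h := by
      refine closure_minimal (fun x hx => ?_) Metric.isClosed_closedBall
      by_contra hn
      rw [Metric.mem_closedBall, Real.dist_eq, not_le] at hn
      exact hx (hzero x hn)
    have hballsub : Metric.closedBall r₁ h ⊆ Ioo 0 r₂ := by
      intro x hx
      rw [Metric.mem_closedBall, Real.dist_eq, abs_le] at hx
      constructor <;> linarith [hx.1, hx.2]
    have hsu := htsup.trans hballsub
    have hc : HasCompactSupport u := (isCompact_closedBall r₁ h).of_isClosed_subset
      (isClosed_tsupport u) htsup
    have hne : u ≠ 0 := by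
      refine Function.ne_iff.2 ⟨r₁, ?_⟩
      have : b (0 : ℝ) = 1 := b.one_of_mem_closedBall (by simp [b.rIn_pos.le])
      simp [hu_def, this]
    obtain ⟨i1, i2, i3, hN, hI, hD⟩ := basic u hu hc hsu hne
    have hcv : ∀ g : ℝ → ℝ, ∫ r, g ((r - r₁) / h) = h * ∫ x, g x := by
      intro g
      rw [integral_sub_right_eq_self (fun r => g (r / h)) r₁, Measure.integral_comp_div,
        abs_of_pos hpos, smul_eq_mul]
    have hIeq : ∫ r in Ioo (0:ℝ) r₂, u r ^ 2 = h * I₀ := by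
      rw [setIntegral_eq_integral_of_forall_compl_eq_zero]
      · exact hcv fun x => b x ^ 2
      · intro x hx
        rw [image_eq_zero_of_notMem_tsupport fun h => hx (hsu h)]
        simp
    have hderiv : ∀ r, deriv u r = deriv b ((r - r₁) / h) / h := by
      intro r
      have hb : DifferentiableAt ℝ b ((r - r₁) / h) :=
        (b.contDiff (n := 1)).differentiable (by norm_num) _
      have := hb.hasDerivAt.comp r (((hasDerivAt_id r).sub_const r₁).div_const h)
      have h2 := this.deriv
      rw [mul_one_div] at h2
      exact h2
    have hJeq : ∫ r in Ioo (0:ℝ) r₂, deriv u r ^ 2 = J₀ / h := by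
      rw [setIntegral_eq_integral_of_forall_compl_eq_zero]
      · simp_rw [hderiv]
        rw [hcv fun x => (deriv b x / h) ^ 2]
        simp_rw [div_pow]
        rw [integral_div]
        field_simp
        rfl
      · intro x hx
        rw [image_eq_zero_of_notMem_tsupport
          fun h => hx (hsu (tsupport_deriv_subset (𝕜 := ℝ) h))]
        simp
    have hI₀pos : 0 < I₀ := by
      rw [hIeq] at hI
      exact (mul_pos_iff_of_pos_left hpos).1 hI
    refine ⟨hI₀pos, _, ⟨u, hu, hc, hsu, hne, rfl⟩, ?_⟩
    have hDpos := lt_of_lt_of_le (mul_pos (sub_pos.2 hsE) hI) hD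
    -- The potential part of the numerator exceeds the denominator only by the quadratic error
    have hP : M₀ * (∫ r in Ioo (0:ℝ) r₂, u r ^ 2 * (1 / r ^ 2)) ≤
        (∫ r in Ioo (0:ℝ) r₂, (u r) ^ 2 * (E₀ - V₀ r)) +
          (A' * h ^ 2) * ∫ r in Ioo (0:ℝ) r₂, u r ^ 2 := by
      rw [← integral_const_mul, ← integral_const_mul,
        ← integral_add i1.integrableOn (i3.const_mul _).integrableOn]
      refine setIntegral_mono_on (i2.const_mul _).integrableOn
        (i1.add (i3.const_mul _)).integrableOn measurableSet_Ioo fun r hr => ?_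
      by_cases hrh : h < |r - r₁|
      · simp [hzero r hrh]
      · push Not at hrh
        have hr0 : 0 < r := hr.1
        have hq := hquad r hr0 (by linarith)
        have hsq : (r - r₁) ^ 2 ≤ h ^ 2 := by
          rw [← sq_abs]; gcongr
        have hr1 : r₁ / 2 ≤ r := by linarith [(abs_le.1 hrh).1]
        have hr4 : r₁ ^ 2 ≤ 4 * r ^ 2 := by nlinarith
        have h5 : M₀ * (1 / r ^ 2) ≤ (E₀ - V₀ r) + A' * h ^ 2 := by
          rw [mul_one_div, div_le_iff₀ (by positivity)]
          have h6 : A * h ^ 2 ≤ A' * h ^ 2 * r ^ 2 := by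
            rw [hA', mul_assoc, mul_assoc]
            refine mul_le_mul_of_nonneg_left ?_ hA.le
            rw [div_mul_eq_mul_div, le_div_iff₀ (by positivity)]
            linarith [mul_le_mul_of_nonneg_left hr4 (sq_nonneg h)]
          linarith [mul_le_mul_of_nonneg_left hsq hA.le]
        linarith [mul_le_mul_of_nonneg_left h5 (sq_nonneg (u r))]
    rw [hN, hJeq, ← mul_div_assoc, div_le_iff₀ hDpos]
    rw [hIeq] at hP hD
    generalize (∫ r in Ioo (0:ℝ) r₂, u r ^ 2 * (1 / r ^ 2)) = P at *
    generalize (∫ r in Ioo (0:ℝ) r₂, (u r) ^ 2 * (E₀ - V₀ r)) = D at *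
    -- The choice of `h` balances the kinetic and the potential error
    have hKeq : K * √κ * ((E₀ - s) * (h * I₀)) = M₀ * (J₀ / h) + κ * (A' * h ^ 2 * (h * I₀)) := by
      have : E₀ - s ≠ 0 := (sub_pos.2 hsE).ne'
      rw [← ht2, ← ht4, hK, hh]
      field_simp
    have hKnn : 0 ≤ K * √κ := by
      have := sub_pos.2 hsE
      positivity
    linarith [mul_le_mul_of_nonneg_left hD hKnn, mul_le_mul_of_nonneg_left hP hκ0.le]
  have hI₀pos : 0 < I₀ := (upper 1 le_rfl).1
  have hKpos : 0 ≤ K := by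
    have := sub_pos.2 hsE
    positivity
  refine ⟨K * √M₀ + 1, by positivity, fun κ hκ => ?_⟩
  have hκ0 : 0 < κ := by linarith
  obtain ⟨-, q, hq, hqle⟩ := upper κ hκ
  have h1 : κ / M₀ ≤ lam κ := by
    rw [hlam κ hκ0]
    exact le_csInf ⟨q, hq⟩ (lower κ hκ0)
  have h2 : lam κ ≤ q := by
    rw [hlam κ hκ0]
    exact csInf_le ⟨κ / M₀, lower κ hκ0⟩ hq
  have h3 : κ ≤ M₀ * lam κ := by
    rw [div_le_iff₀ hM₀pos] at h1; linarith
  refine ⟨h3, ?_⟩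
  have h4 : √κ ≤ √M₀ * √(lam κ) := by
    rw [← Real.sqrt_mul hM₀pos.le]; exact Real.sqrt_le_sqrt h3
  linarith [mul_le_mul_of_nonneg_left h2 hM₀pos.le, mul_le_mul_of_nonneg_left h4 hKpos,
    Real.sqrt_nonneg (lam κ)]
end

section
/- There is C > 0 such that for all m ≥ M and all E ∈ I, the turning point R = R(m,E) satisfies R ≤ C m^{1/2} and |V_m'(R)| ≥ C^{−1} m^{−1/2}; in particular R + |V_m'(R)|^{−1} ≤ 2C m^{1/2}. -/
/-!
The turning point equation `E = V₀ R + m / R ^ 2` and `|R ^ 2 * V₀ R| ≤ C_V` give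
`E * R ^ 2 ≤ C_V + m`, hence `R ≤ A * √m` with `A = √((C_V / M + 1) / Ea)`.
For the slope, `V_m' = V₀' - 2 * m / R ^ 3` with `|V₀'| ≤ C_V / R ^ 3`. If `m ≥ C_V`, then
`-V_m' ≥ m / R ^ 3`, which is at least `A⁻³ / √m` by the bound on `R`. If `m ≤ C_V`, then `R` stays
in a fixed compact interval starting at `r₂`, on which `V_M'` is continuous and negative, so bounded
away from `0`; and `V_m' ≤ V_M'` because `m ≥ M`.
-/


open Set MeasureTheory Filter

theorem contDiffOn_Ioi_of_ext {V₀ W : ℝ → ℝ} (hW : ContDiffOn ℝ 3 W (Set.Ici 0))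
    (hWV : ∀ r > 0, W r = r ^ 2 * V₀ r) : ContDiffOn ℝ 3 V₀ (Set.Ioi 0) := by
  have h : ContDiffOn ℝ 3 (fun r => W r / r ^ 2) (Set.Ioi 0) :=
    (hW.mono Set.Ioi_subset_Ici_self).div (contDiffOn_id.pow 2)
      (fun r hr => pow_ne_zero 2 (ne_of_gt hr))
  refine h.congr fun r hr => ?_
  have hr' : r ≠ 0 := ne_of_gt hr
  rw [hWV r hr]
  field_simp

theorem deriv_add_div_sq {V₀ : ℝ → ℝ} (hV : ContDiffOn ℝ 3 V₀ (Set.Ioi 0)) (m : ℝ) {r : ℝ}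
    (hr : 0 < r) : deriv (fun s => V₀ s + m / s ^ 2) r = deriv V₀ r - 2 * m / r ^ 3 := by
  have h1 : DifferentiableAt ℝ V₀ r :=
    (hV.differentiableOn (by norm_num)).differentiableAt (Ioi_mem_nhds hr)
  have h2 := (hasDerivAt_const r m).div (hasDerivAt_pow 2 r) (pow_ne_zero 2 hr.ne')
  refine ((h1.hasDerivAt.add h2).deriv).trans ?_
  field_simp
  norm_num
  ring

/-- The slope of `V_M` is bounded away from `0` on every compact interval to the right of `r₂`. -/
theorem exists_slope_gap {V₀ : ℝ → ℝ} (hV : ContDiffOn ℝ 3 V₀ (Set.Ioi 0)) {M r₂ : ℝ}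
    (hr₂ : 0 < r₂) (hmono : ∀ r ≥ r₂, deriv (fun s => V₀ s + M / s ^ 2) r < 0)
    {ρ : ℝ} (hρ : r₂ ≤ ρ) :
    ∃ c > 0, ∀ r ∈ Set.Icc r₂ ρ, deriv V₀ r - 2 * M / r ^ 3 ≤ -c := by
  have hsub : Set.Icc r₂ ρ ⊆ Set.Ioi 0 := fun r hr => lt_of_lt_of_le hr₂ hr.1
  have hc : ContinuousOn (fun r => deriv V₀ r - 2 * M / r ^ 3) (Set.Icc r₂ ρ) := by
    refine ((hV.continuousOn_deriv_of_isOpen isOpen_Ioi (by norm_num)).mono hsub).sub ?_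
    exact continuousOn_const.div (continuousOn_id.pow 3)
      (fun r hr => pow_ne_zero 3 (ne_of_gt (hsub hr)))
  obtain ⟨x, hx, hmax⟩ := isCompact_Icc.exists_isMaxOn (Set.nonempty_Icc.2 hρ) hc
  have hneg := hmono x hx.1
  rw [deriv_add_div_sq hV M (hsub hx)] at hneg
  refine ⟨-(deriv V₀ x - 2 * M / x ^ 3), by linarith, fun r hr => ?_⟩
  have := hmax hr
  simp only [Set.mem_ofPred_eq] at this
  linarith

/-- Uniformly in `m ≥ M` and `E ∈ I`, the turning point satisfies `R ≤ C m^{1/2}` and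
`|V_m'(R)| ≥ C⁻¹ m^{−1/2}`; in particular `R + |V_m'(R)|⁻¹ ≤ 2 C m^{1/2}`. -/
theorem turning_point_size_bounds
    (V₀ : ℝ → ℝ)
    (hext : ∃ W : ℝ → ℝ, ContDiffOn ℝ 3 W (Set.Ici 0) ∧ ∀ r > 0, W r = r ^ 2 * V₀ r)
    (C_V : ℝ)
    (hCV : ∀ k : ℕ, k ≤ 3 → ∀ r > 0, |r ^ (2 + k) * iteratedDeriv k V₀ r| ≤ C_V)
    (M r₂ : ℝ) (hM : 0 < M) (hr₂pos : 0 < r₂)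
    (I : Set ℝ) (hI : ∃ Ea Eb : ℝ, 0 < Ea ∧ Ea ≤ Eb ∧ I = Set.Icc Ea Eb)
    (hmono : ∀ r ≥ r₂, deriv (fun s => V₀ s + M / s ^ 2) r < 0)
    (hbarrier : ∀ E ∈ I, ∀ r ∈ Set.Ioo (0:ℝ) r₂, E < V₀ r + M / r ^ 2)
    (R : ℝ → ℝ → ℝ)
    (hR : ∀ m ≥ M, ∀ E ∈ I, r₂ ≤ R m E ∧ V₀ (R m E) + m / (R m E) ^ 2 = E ∧
      (∀ r ∈ Set.Ioo 0 (R m E), E < V₀ r + m / r ^ 2) ∧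
      (∀ r ∈ Set.Ioi (R m E), V₀ r + m / r ^ 2 < E))
    :
    ∃ C > (0:ℝ), ∀ m ≥ M, ∀ E ∈ I,
      R m E ≤ C * Real.sqrt m ∧
      C⁻¹ * (Real.sqrt m)⁻¹ ≤ |deriv (fun s => V₀ s + m / s ^ 2) (R m E)| ∧
      R m E + |deriv (fun s => V₀ s + m / s ^ 2) (R m E)|⁻¹ ≤ 2 * C * Real.sqrt m := by
  obtain ⟨W, hW, hWV⟩ := hext
  obtain ⟨Ea, Eb, hEa, hEab, rfl⟩ := hI
  have hV := contDiffOn_Ioi_of_ext hW hWV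
  have hC0 : 0 ≤ C_V := (abs_nonneg _).trans (hCV 0 (by norm_num) 1 one_pos)
  have hB : 0 < (C_V / M + 1) / Ea := by positivity
  set A := Real.sqrt ((C_V / M + 1) / Ea) with hA
  have hApos : 0 < A := Real.sqrt_pos.2 hB
  have hAsq : A ^ 2 = (C_V / M + 1) / Ea := Real.sq_sqrt hB.le
  have hbound : ∀ m ≥ M, ∀ E ∈ Set.Icc Ea Eb, R m E ≤ A * Real.sqrt m := by
    intro m hm E hE
    obtain ⟨h1, h2, -⟩ := hR m hm E hE
    have hRpos : 0 < R m E := hr₂pos.trans_le h1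
    have hm0 : 0 < m := hM.trans_le hm
    have hv := (abs_le.1 (hCV 0 (by norm_num) _ hRpos)).2
    simp only [iteratedDeriv_zero, add_zero] at hv
    have heq : E * R m E ^ 2 = R m E ^ 2 * V₀ (R m E) + m := by
      have h6 : m / R m E ^ 2 * R m E ^ 2 = m := div_mul_cancel₀ _ (by positivity)
      linear_combination h6 - R m E ^ 2 * h2
    have h3 : Ea * R m E ^ 2 ≤ C_V + m := by
      nlinarith [hE.1, sq_nonneg (R m E)]
    have h4 : C_V ≤ C_V / M * m := by
      rw [div_mul_eq_mul_div, le_div_iff₀ hM]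
      exact mul_le_mul_of_nonneg_left hm hC0
    have h5 : R m E ^ 2 ≤ (A * Real.sqrt m) ^ 2 := by
      rw [mul_pow, Real.sq_sqrt hm0.le, hAsq, div_mul_eq_mul_div, le_div_iff₀ hEa]
      linarith
    exact (pow_le_pow_iff_left₀ hRpos.le (by positivity) (by norm_num)).1 h5
  obtain ⟨c, hc, hgap⟩ := exists_slope_gap hV hr₂pos hmono
    (ρ := r₂ + A * Real.sqrt C_V) (le_add_of_nonneg_right (by positivity))
  have hsM : 0 < Real.sqrt M := Real.sqrt_pos.2 hM
  have hA3 : 0 < A ^ 3 := by positivity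
  have hcM : 0 < (c * Real.sqrt M)⁻¹ := by positivity
  set C := A + A ^ 3 + (c * Real.sqrt M)⁻¹ with hC
  have hCpos : 0 < C := by positivity
  refine ⟨C, hCpos, fun m hm E hE => ?_⟩
  have hm0 : 0 < m := hM.trans_le hm
  have hs : 0 < Real.sqrt m := Real.sqrt_pos.2 hm0
  have hRA := hbound m hm E hE
  have hr := (hR m hm E hE).1
  have hRpos : 0 < R m E := hr₂pos.trans_le hr
  have hRC : R m E ≤ C * Real.sqrt m :=
    hRA.trans (mul_le_mul_of_nonneg_right (by linarith) hs.le)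
  have hlow : C⁻¹ * (Real.sqrt m)⁻¹ ≤ |deriv (fun s => V₀ s + m / s ^ 2) (R m E)| := by
    rw [deriv_add_div_sq hV m hRpos]
    refine le_trans ?_ (neg_le_abs _)
    rcases le_total C_V m with hCm | hCm
    · have hd := (abs_le.1 (hCV 1 (by norm_num) _ hRpos)).2
      rw [iteratedDeriv_one] at hd
      have h1 : m / R m E ^ 3 ≤ -(deriv V₀ (R m E) - 2 * m / R m E ^ 3) := by
        rw [div_le_iff₀ (by positivity)]
        have : 2 * m / R m E ^ 3 * R m E ^ 3 = 2 * m := by field_simp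
        norm_num at hd
        nlinarith
      refine le_trans ?_ h1
      have h3 : R m E ^ 3 ≤ A ^ 3 * Real.sqrt m ^ 3 := by
        rw [← mul_pow]
        exact pow_le_pow_left₀ hRpos.le hRA 3
      have hmC : A ^ 3 * Real.sqrt m ^ 3 ≤ C * Real.sqrt m ^ 3 :=
        mul_le_mul_of_nonneg_right (by linarith) (by positivity)
      rw [← mul_inv, le_div_iff₀ (by positivity), inv_mul_le_iff₀ (by positivity)]
      calc R m E ^ 3 ≤ C * Real.sqrt m ^ 3 := h3.trans hmC
        _ = C * Real.sqrt m * Real.sqrt m ^ 2 := by ring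
        _ = C * Real.sqrt m * m := by rw [Real.sq_sqrt hm0.le]
    · have hmem : R m E ∈ Set.Icc r₂ (r₂ + A * Real.sqrt C_V) := by
        refine ⟨hr, ?_⟩
        have := mul_le_mul_of_nonneg_left (Real.sqrt_le_sqrt hCm) hApos.le
        linarith
      have h1 := hgap _ hmem
      have h2 : 2 * M / R m E ^ 3 ≤ 2 * m / R m E ^ 3 := by gcongr
      have h3 : C⁻¹ * (Real.sqrt m)⁻¹ ≤ c := by
        have h4 : (Real.sqrt m)⁻¹ ≤ (Real.sqrt M)⁻¹ := inv_anti₀ hsM (Real.sqrt_le_sqrt hm)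
        have h5 : C⁻¹ ≤ c * Real.sqrt M := inv_le_of_inv_le₀ (by positivity) (by linarith)
        calc C⁻¹ * (Real.sqrt m)⁻¹ ≤ (c * Real.sqrt M) * (Real.sqrt M)⁻¹ := by gcongr
          _ = c := by field_simp
      linarith
  refine ⟨hRC, hlow, ?_⟩
  have hinv := inv_anti₀ (by positivity) hlow
  rw [← mul_inv, inv_inv] at hinv
  linarith
end

section
/- Assume additionally lim_{r→0⁺} ( r² V₀(r) ) + M > 0. Then there exist C > 0 and r₀ ∈ (0, r₂) such that for all m ≥ M, all E ∈ I, and all 0 < r ≤ r₀: ∫_r^{R(m,E)} √( V_m(s) − E ) ds ≥ C^{−1} m^{1/2} ln(1/r). -/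
open Set MeasureTheory Filter intervalIntegral

/-! Near the origin the potential dominates an inverse square: with `δ = (L + M) / 2`, for
`0 < s ≤ r₁` one has `s² (V_m(s) - E) = (s² V₀(s) + M - s² E) + (m - M) ≥ δ + (m - M) ≥ c m`, where
`c = min 1 (δ / M)` does not depend on `m ≥ M` or `E ∈ I`. Hence `√(V_m - E) ≥ √c √m / s` on
`(0, r₁]`, and integrating over `[r, r₁]` gives `√c √m log (r₁ / r)`; the rest of the integral is
nonnegative. For `r ≤ r₁²` with `r₁ < 1`, `log (r₁ / r) ≥ log (1 / r) / 2`. -/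

/-- If additionally `lim_{r→0⁺}(r²V₀(r)) + M > 0`, then the Agmon-type integral
`∫_r^{R(m,E)} √(V_m − E)` grows at least like `C⁻¹ m^{1/2} log(1/r)` as `r → 0⁺`,
uniformly for `m ≥ M` and `E ∈ I`. -/
theorem agmon_integral_log_lower_bound
    (V₀ : ℝ → ℝ)
    (hext : ∃ W : ℝ → ℝ, ContDiffOn ℝ 3 W (Set.Ici 0) ∧ ∀ r > 0, W r = r ^ 2 * V₀ r)
    (C_V : ℝ)
    (hCV : ∀ k : ℕ, k ≤ 3 → ∀ r > 0, |r ^ (2 + k) * iteratedDeriv k V₀ r| ≤ C_V)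
    (M r₂ : ℝ) (hM : 0 < M) (hr₂pos : 0 < r₂)
    (I : Set ℝ) (hI : ∃ Ea Eb : ℝ, 0 < Ea ∧ Ea ≤ Eb ∧ I = Set.Icc Ea Eb)
    (hmono : ∀ r ≥ r₂, deriv (fun s => V₀ s + M / s ^ 2) r < 0)
    (hbarrier : ∀ E ∈ I, ∀ r ∈ Set.Ioo (0:ℝ) r₂, E < V₀ r + M / r ^ 2)
    (R : ℝ → ℝ → ℝ)
    (hR : ∀ m ≥ M, ∀ E ∈ I, r₂ ≤ R m E ∧ V₀ (R m E) + m / (R m E) ^ 2 = E ∧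
      (∀ r ∈ Set.Ioo 0 (R m E), E < V₀ r + m / r ^ 2) ∧
      (∀ r ∈ Set.Ioi (R m E), V₀ r + m / r ^ 2 < E))
    (hlim : ∃ L : ℝ, Filter.Tendsto (fun r => r ^ 2 * V₀ r)
      (nhdsWithin 0 (Set.Ioi 0)) (nhds L) ∧ 0 < L + M) :
    ∃ C > (0:ℝ), ∃ r₀ ∈ Set.Ioo (0:ℝ) r₂, ∀ m ≥ M, ∀ E ∈ I, ∀ r : ℝ, 0 < r → r ≤ r₀ →
      C⁻¹ * Real.sqrt m * Real.log (1 / r)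
        ≤ ∫ s in r..(R m E), Real.sqrt (V₀ s + m / s ^ 2 - E) := by
  obtain ⟨W, hW, hWV⟩ := hext
  obtain ⟨L, hL, hLM⟩ := hlim
  obtain ⟨Ea, Eb, hEa, hEab, rfl⟩ := hI
  have hV : ContinuousOn V₀ (Set.Ioi 0) := by
    have h1 : ContinuousOn (fun r => W r / r ^ 2) (Set.Ioi 0) := by
      refine (hW.continuousOn.mono Set.Ioi_subset_Ici_self).div (by fun_prop) ?_
      intro x hx
      exact pow_ne_zero 2 (ne_of_gt hx)
    refine h1.congr ?_
    intro x hx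
    have hx' : x ≠ 0 := ne_of_gt hx
    simp only [hWV x hx]
    field_simp
  obtain ⟨δ, hδ⟩ : ∃ δ, δ = (L + M) / 2 := ⟨_, rfl⟩
  have hδ0 : 0 < δ := by linarith
  have hlim2 : Tendsto (fun r : ℝ => r ^ 2 * V₀ r + M - r ^ 2 * Eb)
      (nhdsWithin 0 (Set.Ioi 0)) (nhds (L + M - 0 ^ 2 * Eb)) := by
    refine (hL.add_const M).sub ?_
    have : Continuous (fun r : ℝ => r ^ 2 * Eb) := by fun_prop
    exact (this.tendsto 0).mono_left nhdsWithin_le_nhds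
  have hev := hlim2.eventually (lt_mem_nhds (show δ < L + M - 0 ^ 2 * Eb by linarith))
  obtain ⟨u, hu0, hu⟩ := mem_nhdsGT_iff_exists_Ioo_subset.1 hev
  have hu0' : 0 < u := hu0
  obtain ⟨r₁, hr₁0, hr₁⟩ := exists_between (lt_min (lt_min hu0' hr₂pos) one_pos)
  have hr₁u : r₁ < u := hr₁.trans_le ((min_le_left _ _).trans (min_le_left _ _))
  have hr₁2 : r₁ < r₂ := hr₁.trans_le ((min_le_left _ _).trans (min_le_right _ _))
  have hr₁1 : r₁ < 1 := hr₁.trans_le (min_le_right _ _)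
  have hsq : r₁ ^ 2 < r₁ := by nlinarith
  obtain ⟨c, hc⟩ : ∃ c, c = min 1 (δ / M) := ⟨_, rfl⟩
  have hc0 : 0 < c := by rw [hc]; exact lt_min one_pos (div_pos hδ0 hM)
  have hc1 : c ≤ 1 := hc ▸ min_le_left _ _
  have hcM : c * M ≤ δ := by
    rw [← le_div_iff₀ hM]; exact hc ▸ min_le_right _ _
  have hsc : 0 < √c := Real.sqrt_pos.2 hc0
  refine ⟨2 / √c, by positivity, r₁ ^ 2, ⟨by positivity, hsq.trans hr₁2⟩, ?_⟩
  intro m hm E hE r hr0 hr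
  have hrr₁ : r ≤ r₁ := hr.trans hsq.le
  have hR2 : r₁ ≤ R m E := hr₁2.le.trans (hR m hm E hE).1
  have hint : ∀ a b : ℝ, 0 < a → a ≤ b →
      IntervalIntegrable (fun s => √(V₀ s + m / s ^ 2 - E)) volume a b := by
    intro a b ha hab
    refine ContinuousOn.intervalIntegrable ?_
    rw [uIcc_of_le hab]
    have hsub : Set.Icc a b ⊆ Set.Ioi 0 := fun x hx => ha.trans_le hx.1
    refine ContinuousOn.sqrt (((hV.mono hsub).add ?_).sub continuousOn_const)
    refine continuousOn_const.div (by fun_prop) ?_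
    intro x hx
    exact pow_ne_zero 2 (ne_of_gt (hsub hx))
  have hpt : ∀ s ∈ Set.Icc r r₁, √c * √m * s⁻¹ ≤ √(V₀ s + m / s ^ 2 - E) := by
    intro s hs
    have hs0 : 0 < s := hr0.trans_le hs.1
    have h1 : δ < s ^ 2 * V₀ s + M - s ^ 2 * Eb := hu ⟨hs0, hs.2.trans_lt hr₁u⟩
    have h2 : s ^ 2 * E ≤ s ^ 2 * Eb := mul_le_mul_of_nonneg_left hE.2 (by positivity)
    have h3 : c * m ≤ δ + (m - M) := by nlinarith
    have h4 : V₀ s + m / s ^ 2 - E = (s ^ 2 * V₀ s + m - s ^ 2 * E) / s ^ 2 := by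
      field_simp
    apply Real.le_sqrt_of_sq_le
    rw [h4, le_div_iff₀ (by positivity), mul_pow, mul_pow, Real.sq_sqrt hc0.le,
      Real.sq_sqrt (hM.le.trans hm), mul_assoc, ← mul_pow, inv_mul_cancel₀ hs0.ne']
    linarith
  have hmain : √c * √m * Real.log (r₁ / r) ≤ ∫ s in r..r₁, √(V₀ s + m / s ^ 2 - E) := by
    rw [← integral_inv_of_pos hr0 hr₁0, ← intervalIntegral.integral_const_mul]
    refine intervalIntegral.integral_mono_on hrr₁ ?_ (hint _ _ hr0 hrr₁) hpt
    refine (intervalIntegrable_inv_iff.2 (Or.inr ?_)).const_mul _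
    rw [uIcc_of_le hrr₁]
    exact fun h => hr0.not_ge h.1
  have hrest : 0 ≤ ∫ s in r₁..(R m E), √(V₀ s + m / s ^ 2 - E) :=
    intervalIntegral.integral_nonneg hR2 fun _ _ => Real.sqrt_nonneg _
  rw [← intervalIntegral.integral_add_adjacent_intervals (hint _ _ hr0 hrr₁)
    (hint _ _ hr₁0 hR2)]
  have hlog : Real.log (1 / r) / 2 ≤ Real.log (r₁ / r) := by
    have := Real.log_le_log hr0 hr
    rw [Real.log_pow] at this
    rw [Real.log_div one_ne_zero hr0.ne', Real.log_div hr₁0.ne' hr0.ne', Real.log_one]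
    push_cast at this
    linarith
  calc (2 / √c)⁻¹ * √m * Real.log (1 / r)
      = √c * √m * (Real.log (1 / r) / 2) := by rw [inv_div]; ring
    _ ≤ √c * √m * Real.log (r₁ / r) := by gcongr
    _ ≤ _ := by linarith
end

section
/- There is C > 0 such that for all m ≥ M, all E ∈ I, and all r ≥ R(m,E): | (r − R(m,E)) √E − ∫_{R(m,E)}^r √( E − V_m(s) ) ds | ≤ C m^{1/2}. (This bounds the deviation of the outgoing phase integral from free linear growth, uniformly in the angular momentum.) -/
/-!
Write `V = V₀ + m / s²`. Since `√E - √(E - V) = V / (√E + √(E - V))`, the deviation density is at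
most `|V| / √E ≤ K / s²` with `K = (C_V + m) / √(min I)` (`abs_sqrt_sub_sqrt_le`). Its integral over
`[R, r]` is at most `K / R` (`abs_integral_le_div_of_inv_sq`), which is of order `m / R`.
The turning point equation `R² E = R² V₀(R) + m` together with `R ≥ r₂` gives
`m ≤ R² (E + C_V / r₂²)`, so `R` is bounded below by a multiple of `√m` and `m / R` is `O(√m)`.
-/

open Set MeasureTheory Filter intervalIntegral

lemma abs_sqrt_sub_sqrt_le {E v : ℝ} (hE : 0 < E) (hv : v ≤ E) :
    |√E - √(E - v)| ≤ |v| / √E := by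
  have hs : 0 < √E := Real.sqrt_pos.2 hE
  have hb : 0 ≤ √(E - v) := Real.sqrt_nonneg _
  rw [le_div_iff₀ hs]
  have h1 : (√E - √(E - v)) * (√E + √(E - v)) = v := by
    nlinarith [Real.sq_sqrt hE.le, Real.sq_sqrt (sub_nonneg.2 hv)]
  calc |√E - √(E - v)| * √E ≤ |√E - √(E - v)| * (√E + √(E - v)) :=
        mul_le_mul_of_nonneg_left (by linarith) (abs_nonneg _)
    _ = |v| := by
        conv_rhs => rw [← h1, abs_mul, abs_of_pos (by linarith : 0 < √E + √(E - v))]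

lemma abs_integral_le_div_of_inv_sq {f : ℝ → ℝ} {K a b : ℝ} (hK : 0 ≤ K) (ha : 0 < a)
    (hab : a ≤ b) (hf : ∀ s ∈ Set.Ioc a b, |f s| ≤ K / s ^ 2) :
    |∫ s in a..b, f s| ≤ K / a := by
  have hpos : ∀ s ∈ Set.uIcc a b, 0 < s := fun s hs => by
    rw [Set.uIcc_of_le hab] at hs
    exact ha.trans_le hs.1
  have hint : IntervalIntegrable (fun s : ℝ => K / s ^ 2) volume a b := by
    apply ContinuousOn.intervalIntegrable
    exact continuousOn_const.div (continuousOn_id.pow 2)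
      fun s hs => pow_ne_zero 2 (hpos s hs).ne'
  have h1 : ‖∫ s in a..b, f s‖ ≤ ∫ s in a..b, K / s ^ 2 :=
    intervalIntegral.norm_integral_le_of_norm_le hab (ae_of_all _ hf) hint
  have h2 : ∫ s in a..b, K / s ^ 2 = -K / b - -K / a := by
    refine intervalIntegral.integral_eq_sub_of_hasDerivAt (f := fun s => -K / s)
      (fun s hs => ?_) hint
    have h := (hasDerivAt_inv (hpos s hs).ne').const_mul (-K)
    rw [show K / s ^ 2 = -K * -(s ^ 2)⁻¹ by ring]
    exact h
  have h3 : 0 ≤ K / b := div_nonneg hK (ha.le.trans hab)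
  rw [h2, Real.norm_eq_abs, neg_div, neg_div] at h1
  linarith

/-- Uniformly in `m ≥ M` and `E ∈ I`, the outgoing phase integral deviates from free
linear growth by at most `C m^{1/2}`:
`|(r − R)√E − ∫_R^r √(E − V_m)| ≤ C m^{1/2}` for all `r ≥ R(m,E)`. -/
theorem phase_integral_linear_growth
    (V₀ : ℝ → ℝ)
    (hext : ∃ W : ℝ → ℝ, ContDiffOn ℝ 3 W (Set.Ici 0) ∧ ∀ r > 0, W r = r ^ 2 * V₀ r)
    (C_V : ℝ)
    (hCV : ∀ k : ℕ, k ≤ 3 → ∀ r > 0, |r ^ (2 + k) * iteratedDeriv k V₀ r| ≤ C_V)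
    (M r₂ : ℝ) (hM : 0 < M) (hr₂pos : 0 < r₂)
    (I : Set ℝ) (hI : ∃ Ea Eb : ℝ, 0 < Ea ∧ Ea ≤ Eb ∧ I = Set.Icc Ea Eb)
    (hmono : ∀ r ≥ r₂, deriv (fun s => V₀ s + M / s ^ 2) r < 0)
    (hbarrier : ∀ E ∈ I, ∀ r ∈ Set.Ioo (0:ℝ) r₂, E < V₀ r + M / r ^ 2)
    (R : ℝ → ℝ → ℝ)
    (hR : ∀ m ≥ M, ∀ E ∈ I, r₂ ≤ R m E ∧ V₀ (R m E) + m / (R m E) ^ 2 = E ∧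
      (∀ r ∈ Set.Ioo 0 (R m E), E < V₀ r + m / r ^ 2) ∧
      (∀ r ∈ Set.Ioi (R m E), V₀ r + m / r ^ 2 < E))
    :
    ∃ C > (0:ℝ), ∀ m ≥ M, ∀ E ∈ I, ∀ r ≥ R m E,
      |(r - R m E) * Real.sqrt E - ∫ s in (R m E)..r, Real.sqrt (E - (V₀ s + m / s ^ 2))|
        ≤ C * Real.sqrt m := by
  obtain ⟨W, hW, hWV⟩ := hext
  obtain ⟨Ea, Eb, hEa, hEab, rfl⟩ := hI
  have hV₀ : ∀ r > 0, |V₀ r| ≤ C_V / r ^ 2 := fun r hr => by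
    have h := hCV 0 (by norm_num) r hr
    simp only [add_zero, iteratedDeriv_zero, abs_mul, abs_of_pos (pow_pos hr 2)] at h
    rw [le_div_iff₀ (pow_pos hr 2)]
    linarith
  have hC : 0 ≤ C_V := (abs_nonneg _).trans (hCV 0 (by norm_num) 1 one_pos)
  have hcont : ContinuousOn V₀ (Set.Ioi 0) := by
    have h : ContinuousOn (fun r => W r / r ^ 2) (Set.Ioi 0) :=
      (hW.continuousOn.mono Set.Ioi_subset_Ici_self).div (continuousOn_id.pow 2)
        fun r hr => pow_ne_zero 2 (ne_of_gt hr)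
    refine h.congr fun r hr => ?_
    have hr' : r ≠ 0 := ne_of_gt hr
    simp only [hWV r hr]
    field_simp
  set A : ℝ := Eb + C_V / r₂ ^ 2 with hA
  have hApos : 0 < A := by
    have := hEa.trans_le hEab
    positivity
  have hsA : 0 < √A := Real.sqrt_pos.2 hApos
  have hsEa : 0 < √Ea := Real.sqrt_pos.2 hEa
  refine ⟨(C_V / M + 1) * √A / √Ea, by positivity, fun m hm E hE r hr => ?_⟩
  obtain ⟨hRr₂, hReq, -, hRgt⟩ := hR m hm E hE
  set ρ := R m E
  have hρ : 0 < ρ := hr₂pos.trans_le hRr₂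
  have hmpos : 0 < m := hM.trans_le hm
  have hEpos : 0 < E := hEa.trans_le hE.1
  have hsm : 0 < √m := Real.sqrt_pos.2 hmpos
  -- The turning point equation bounds `ρ` below by a multiple of `√m`.
  have hmρ : m ≤ A * ρ ^ 2 := by
    have h1 : -V₀ ρ ≤ C_V / ρ ^ 2 := (neg_le_abs _).trans (hV₀ ρ hρ)
    have h2 : C_V / ρ ^ 2 ≤ C_V / r₂ ^ 2 := by gcongr
    have h3 : m / ρ ^ 2 ≤ A := by linarith [hE.2]
    exact (div_le_iff₀ (pow_pos hρ 2)).1 h3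
  have hsmρ : √m ≤ √A * ρ := by
    rw [← Real.sqrt_sq hρ.le, ← Real.sqrt_mul hApos.le]
    exact Real.sqrt_le_sqrt hmρ
  have hI : IntervalIntegrable (fun s => √(E - (V₀ s + m / s ^ 2))) volume ρ r := by
    apply ContinuousOn.intervalIntegrable
    have hsub : Set.uIcc ρ r ⊆ Set.Ioi 0 := by
      rw [Set.uIcc_of_le hr]
      exact fun s hs => hρ.trans_le hs.1
    refine (continuousOn_const.sub ((hcont.mono hsub).add ?_)).sqrt
    exact continuousOn_const.div (continuousOn_id.pow 2)
      fun s hs => pow_ne_zero 2 (ne_of_gt (hsub hs))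
  have hdiff : (r - ρ) * √E - ∫ s in ρ..r, √(E - (V₀ s + m / s ^ 2))
      = ∫ s in ρ..r, (√E - √(E - (V₀ s + m / s ^ 2))) := by
    rw [intervalIntegral.integral_sub intervalIntegrable_const hI,
      intervalIntegral.integral_const, smul_eq_mul]
  rw [hdiff]
  have hbd : |∫ s in ρ..r, (√E - √(E - (V₀ s + m / s ^ 2)))| ≤ (C_V + m) / √Ea / ρ := by
    refine abs_integral_le_div_of_inv_sq (by positivity) hρ hr fun s hs => ?_
    have hs0 : 0 < s := hρ.trans hs.1
    have hv : |V₀ s + m / s ^ 2| ≤ (C_V + m) / s ^ 2 := by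
      refine (abs_add_le _ _).trans ?_
      rw [add_div, abs_of_pos (show 0 < m / s ^ 2 by positivity)]
      linarith [hV₀ s hs0]
    calc _ ≤ |V₀ s + m / s ^ 2| / √E := abs_sqrt_sub_sqrt_le hEpos (hRgt s hs.1).le
      _ ≤ ((C_V + m) / s ^ 2) / √Ea := by
          gcongr
          exact hE.1
      _ = _ := by rw [div_right_comm]
  refine hbd.trans ?_
  have hCm : C_V + m ≤ (C_V / M + 1) * m := by
    have h : C_V / M * M ≤ C_V / M * m := by gcongr
    rw [div_mul_cancel₀ _ hM.ne'] at h
    linarith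
  rw [div_le_iff₀ hρ]
  calc (C_V + m) / √Ea ≤ (C_V / M + 1) * (√m * √m) / √Ea := by
        rw [Real.mul_self_sqrt hmpos.le]
        gcongr
    _ ≤ (C_V / M + 1) * ((√A * ρ) * √m) / √Ea := by gcongr
    _ = _ := by ring
end

section
/- There exist δ > 0 and C > 0 such that for all h ∈ (0,1], all m ≥ M, and all E ∈ I: ∫_{R−δ√m}^{R+δ√m} |G(r)| dr ≤ C, where the integral is taken over r ≠ R. -/
open Set MeasureTheory Filter intervalIntegral

/-!
Rescale around the turning point: with `r = R (1 + u)` and `D = -f'(R) > 0`, put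
`φ(u) = f(R + R u) / (D R)`. Then `φ(0) = 0`, `φ'(0) = -1`, and the decay of the derivatives of
`V₀` together with the nondegeneracy `D R³ ≥ κ` (`turning_point_bounds`) bounds `φ''(0)` and the
Lipschitz constant of `φ''`, uniformly in `h`, `m`, `E`.

The bracket in `G` splits into `R⁻²` times the same expression for `φ`, namely
`5 (φ'/φ)² - 4 φ''/φ - 5 φ/ζ³`, plus `4/r²`. With `φ = -u (1 - b u + O(u²))` one finds
`5 (φ'/φ)² = 5 u⁻² (1 - 2 b u + O(u²))`, `-4 φ''/φ = 8 b/u + O(1)` and, since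
`ζ³ = -sign(u) (3/2 ∫₀ᵘ √|φ|)² = -u³ (1 - (3/10) b u + O(u²))²`,
`5 φ/ζ³ = 5 u⁻² (1 - (2/5) b u + O(u²))`. The `u⁻²` terms cancel, and so do the `u⁻¹` terms
(`-10 b + 8 b + 2 b = 0`), so the expression is bounded (`normalized_bracket_bounded`).

What remains of `G` is the factor `|f|^(-1/2)`, and `|f(r)| ≥ D |r - R| / 2`. This gives
`|G(r)| ≤ C R^(-1/2) |r - R|^(-1/2)` (`pointwise_bound`). Integrated over `|r - R| < δ √m` this is
at most `4 C (δ √m / R)^(1/2)`, which is bounded since `R ≥ c √m`.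
-/

/-! ### Expansion at a normalized turning point -/


/-- The cancellation of the singular terms. Here `1 + u(-b + e₀ u)`, `1 + u(-2b + e₁ u)`,
`2b + e₂ u` and `1 + u(-(3/10) b + e u)` stand for `-φ/u`, `-φ'`, `φ''` and the normalized
`(3/2) ∫₀ᵘ √|φ|`. The coefficients of `1` and `u` in the numerator vanish, and the quotient by `u²`
is a polynomial, hence bounded on a compact box. -/
lemma remainder_bounded (L : ℝ) : ∃ C : ℝ, ∀ u b e₀ e₁ e₂ e : ℝ,
    |u| ≤ L → |b| ≤ L → |e₀| ≤ L → |e₁| ≤ L → |e₂| ≤ L → |e| ≤ L →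
    |5 * (1 + u * (-2 * b + e₁ * u)) ^ 2 * (1 + u * (-(3 / 10) * b + e * u)) ^ 2
      + 4 * u * (2 * b + e₂ * u) * (1 + u * (-b + e₀ * u)) *
        (1 + u * (-(3 / 10) * b + e * u)) ^ 2
      - 5 * (1 + u * (-b + e₀ * u)) ^ 3| ≤ C * u ^ 2 := by
  let q : (Fin 6 → ℝ) → ℝ := fun x => -2 * x 1 + x 3 * x 0
  let s : (Fin 6 → ℝ) → ℝ := fun x => -(3 / 10) * x 1 + x 5 * x 0
  let p : (Fin 6 → ℝ) → ℝ := fun x => -x 1 + x 2 * x 0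
  let F : (Fin 6 → ℝ) → ℝ := fun x =>
    10 * x 3 + 10 * x 5 - 15 * x 2
      + 5 * (q x ^ 2 + s x ^ 2 + 4 * q x * s x + 2 * x 0 * (q x * s x ^ 2 + q x ^ 2 * s x)
        + x 0 ^ 2 * q x ^ 2 * s x ^ 2)
      + 4 * x 4
      + 4 * (2 * x 1 + x 4 * x 0) *
        (p x + 2 * s x + x 0 * (s x ^ 2 + 2 * p x * s x) + x 0 ^ 2 * p x * s x ^ 2)
      - 15 * p x ^ 2 - 5 * x 0 * p x ^ 3
  have hF : Continuous F := by
    simp only [F, q, s, p]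
    fun_prop
  obtain ⟨C, hC⟩ := (isCompact_univ_pi (fun _ : Fin 6 => isCompact_Icc (a := -L) (b := L))
    ).exists_bound_of_continuousOn hF.continuousOn
  refine ⟨C, fun u b e₀ e₁ e₂ e h0 h1 h2 h3 h4 h5 => ?_⟩
  have h := hC ![u, b, e₀, e₁, e₂, e] (by
    intro i _
    rw [mem_Icc, ← abs_le]
    fin_cases i <;> assumption)
  have : |F ![u, b, e₀, e₁, e₂, e] * u ^ 2| ≤ C * u ^ 2 := by
    rw [abs_mul, abs_of_nonneg (sq_nonneg u)]
    exact mul_le_mul_of_nonneg_right h (sq_nonneg u)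
  convert this using 2
  simp only [F, q, s, p, Matrix.cons_val]
  ring

/-- First and second order Taylor expansion, under a Lipschitz condition on `φ''` at `0`. -/
lemma taylor_bounds {K : ℝ} {φ φ₁ φ₂ : ℝ → ℝ} (h0 : φ 0 = 0) (h1 : φ₁ 0 = -1)
    (hφ : ∀ u, |u| ≤ 1 / 2 → HasDerivAt φ (φ₁ u) u ∧ HasDerivAt φ₁ (φ₂ u) u)
    (h2 : ∀ u, |u| ≤ 1 / 2 → |φ₂ u - φ₂ 0| ≤ K * |u|) (u : ℝ) (hu : |u| ≤ 1 / 2) :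
    |φ₁ u - (-1 + φ₂ 0 * u)| ≤ K * u ^ 2 ∧
      |φ u - (-u + φ₂ 0 / 2 * u ^ 2)| ≤ K * |u| ^ 3 := by
  have key : ∀ u, |u| ≤ 1 / 2 → |φ₁ u - (-1 + φ₂ 0 * u)| ≤ K * u ^ 2 := by
    intro u hu
    have hK : 0 ≤ K * |u| := (abs_nonneg _).trans (h2 u hu)
    have hle : ∀ x ∈ uIcc 0 u, |x| ≤ |u| := fun x hx => by
      simpa using abs_sub_left_of_mem_uIcc hx
    have := (convex_uIcc 0 u).norm_image_sub_le_of_norm_hasDerivWithin_le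
      (f := fun x => φ₁ x - φ₂ 0 * x) (f' := fun x => φ₂ x - φ₂ 0) (C := K * |u|)
      (x := 0) (y := u)
      (fun x hx => by
        have := ((hφ x ((hle x hx).trans hu)).2.sub ((hasDerivAt_id x).const_mul (φ₂ 0)))
        exact (this.congr_deriv (by simp)).hasDerivWithinAt)
      (fun x hx => by
        have hx' := hle x hx
        rw [Real.norm_eq_abs]
        rcases eq_or_ne u 0 with rfl | hu0
        · have : x = 0 := by simpa using hx'
          simp [this]
        · have hKn : 0 ≤ K := nonneg_of_mul_nonneg_left hK (abs_pos.mpr hu0)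
          exact (h2 x (hx'.trans hu)).trans (by gcongr))
      left_mem_uIcc right_mem_uIcc
    simp only [h1, Real.norm_eq_abs, mul_zero, sub_zero] at this
    rw [mul_assoc, abs_mul_abs_self, ← sq] at this
    convert this using 2
    ring
  refine ⟨key u hu, ?_⟩
  have hle : ∀ x ∈ uIcc 0 u, |x| ≤ |u| := fun x hx => by
    simpa using abs_sub_left_of_mem_uIcc hx
  have := (convex_uIcc 0 u).norm_image_sub_le_of_norm_hasDerivWithin_le
    (f := fun x => φ x + x - φ₂ 0 / 2 * x ^ 2)
    (f' := fun x => φ₁ x - (-1 + φ₂ 0 * x)) (C := K * u ^ 2)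
    (x := 0) (y := u)
    (fun x hx => by
      have := (((hφ x ((hle x hx).trans hu)).1.add (hasDerivAt_id x)).sub
        (((hasDerivAt_id x).pow 2).const_mul (φ₂ 0 / 2)))
      refine (this.congr_deriv ?_).hasDerivWithinAt
      simp
      ring)
    (fun x hx => by
      have hx' := hle x hx
      rw [Real.norm_eq_abs]
      rcases eq_or_ne u 0 with rfl | hu0
      · have : x = 0 := by simpa using hx'
        simp [this, h1]
      · have hKn : 0 ≤ K := by
          have := (abs_nonneg _).trans (h2 u hu)
          exact nonneg_of_mul_nonneg_left this (abs_pos.mpr hu0)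
        refine (key x (hx'.trans hu)).trans ?_
        have := sq_le_sq.mpr hx'
        gcongr)
    left_mem_uIcc right_mem_uIcc
  simp only [h0, Real.norm_eq_abs, mul_zero, sub_zero, add_zero, ne_eq, OfNat.ofNat_ne_zero, not_false_eq_true, zero_pow] at this
  rw [← sq_abs u, mul_assoc, ← pow_succ] at this
  simpa [sub_add_eq_sub_sub] using this

/-- `√|s (1 + w)| = √s (1 + w / 2 + O(w²))`, integrated. -/
lemma integral_sqrt_expansion {K b u : ℝ} {ψ : ℝ → ℝ} (hK : 1 ≤ K) (hu : 0 < u)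
    (hKu : K * u ≤ 1 / 8) (hb : |b| ≤ K) (hc : ContinuousOn ψ (Icc 0 u))
    (h : ∀ s ∈ Icc 0 u, |ψ s - (s - b * s ^ 2)| ≤ K * s ^ 3) :
    |(∫ s in (0 : ℝ)..u, √|ψ s|) - u * √u * (2 / 3 - b * u / 5)|
      ≤ 3 * K ^ 2 * u ^ 2 * (u * √u) := by
  have hsq : ContinuousOn (fun s => √|ψ s|) (uIcc 0 u) := by
    rw [uIcc_of_le hu.le]; exact hc.abs.sqrt
  have hi1 : IntervalIntegrable (fun s => √|ψ s|) volume 0 u := hsq.intervalIntegrable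
  have hi2 : IntervalIntegrable (fun s : ℝ => √s * (1 - b * s / 2)) volume 0 u :=
    (by fun_prop : Continuous (fun s : ℝ => √s * (1 - b * s / 2))).intervalIntegrable _ _
  have hmodel : ∫ s in (0 : ℝ)..u, √s * (1 - b * s / 2) = u * √u * (2 / 3 - b * u / 5) := by
    have hderiv : ∀ x ∈ Ioo 0 u, HasDerivAt (fun s : ℝ => s * √s * (2 / 3 - b * s / 5))
        (√x * (1 - b * x / 2)) x := by
      intro x hx
      have hx0 : 0 < x := hx.1
      have hs : 0 < √x := Real.sqrt_pos.mpr hx0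
      have := (((hasDerivAt_id x).mul (Real.hasDerivAt_sqrt hx0.ne')).mul
        ((((hasDerivAt_id x).const_mul b).div_const 5).const_sub (2 / 3)))
      refine this.congr_deriv ?_
      have hxx : x = √x ^ 2 := (Real.sq_sqrt hx0.le).symm
      simp only [id, Pi.mul_apply]
      generalize √x = t at *
      subst hxx
      field_simp
      ring
    rw [integral_eq_sub_of_hasDerivAt_of_le hu.le (by fun_prop) hderiv hi2]
    simp
  rw [← hmodel, ← integral_sub hi1 hi2]
  have hpt : ∀ s ∈ uIoc 0 u, ‖√|ψ s| - √s * (1 - b * s / 2)‖ ≤ 3 * K ^ 2 * u ^ 2 * √u := by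
    intro s hs
    rw [uIoc_of_le hu.le] at hs
    have hs0 : 0 < s := hs.1
    have hs' : √s ≤ √u := Real.sqrt_le_sqrt hs.2
    set w : ℝ := ψ s / s - 1 with hw
    have hψ : ψ s = s * (1 + w) := by rw [hw]; field_simp; ring
    have hw1 : |w + b * s| ≤ K * s ^ 2 := by
      have h1 := h s ⟨hs0.le, hs.2⟩
      rw [show ψ s - (s - b * s ^ 2) = s * (w + b * s) by rw [hψ]; ring, abs_mul,
        abs_of_pos hs0] at h1
      nlinarith
    have hKs : K * s ≤ 1 / 8 := by nlinarith [hs.2]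
    have hs1 : s ≤ 1 / 8 := by nlinarith
    have hbs : |b * s| ≤ K * s := by
      rw [abs_mul, abs_of_pos hs0]; gcongr
    have hw2 : |w| ≤ 2 * (K * s) := by
      have : |w| ≤ |w + b * s| + |b * s| := by
        simpa using abs_sub (w + b * s) (b * s)
      nlinarith
    have hw3 := abs_le.mp hw2
    have hr : 0 ≤ √(1 + w) := Real.sqrt_nonneg _
    have hr2 : √(1 + w) ^ 2 = 1 + w := Real.sq_sqrt (by linarith)
    have hsw : |√(1 + w) - (1 + w / 2)| ≤ w ^ 2 / 2 := by
      generalize √(1 + w) = y at *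
      have : y - (1 + w / 2) = -(y - 1) ^ 2 / 2 := by linarith [hr2]
      rw [this, neg_div, abs_neg, abs_of_nonneg (by positivity)]
      have h1 : w = (y - 1) * (y + 1) := by linarith
      rw [h1, mul_pow]
      nlinarith [sq_nonneg (y - 1), mul_nonneg (sq_nonneg (y-1)) hr, mul_nonneg (sq_nonneg (y-1)) (mul_nonneg hr hr)]
    have hmain : |√(1 + w) - (1 - b * s / 2)| ≤ 3 * (K * s) ^ 2 := by
      have e1 : √(1 + w) - (1 - b * s / 2)
        = (√(1 + w) - (1 + w / 2)) + (w + b * s) / 2 := by ring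
      rw [e1]
      refine (abs_add_le _ _).trans ?_
      rw [abs_div, abs_of_pos (two_pos : (0 : ℝ) < 2)]
      have : w ^ 2 ≤ (2 * (K * s)) ^ 2 := sq_le_sq.mpr (hw2.trans (le_abs_self _))
      nlinarith [mul_le_mul_of_nonneg_right hK (by positivity : 0 ≤ K * s ^ 2)]
    have e2 : √|ψ s| = √s * √(1 + w) := by
      rw [hψ, abs_of_nonneg (mul_nonneg hs0.le (by linarith)), Real.sqrt_mul hs0.le]
    rw [e2, ← mul_sub, norm_mul, Real.norm_eq_abs, Real.norm_eq_abs,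
      abs_of_nonneg (Real.sqrt_nonneg s)]
    calc √s * |√(1 + w) - (1 - b * s / 2)| ≤ √u * (3 * (K * u) ^ 2) := by
          gcongr
          refine hmain.trans ?_
          have := hs.2
          gcongr
      _ = _ := by ring
  have := norm_integral_le_of_norm_le_const hpt
  rw [Real.norm_eq_abs, sub_zero, abs_of_pos hu] at this
  refine this.trans (le_of_eq (by ring))

/-- The square of `(3/2) ∫₀ᵘ √|φ|`, which is `|ζ|³`, is `|u|³ (1 - (3/10) b u + O(u²))²`, with
`b = φ''(0) / 2`. For `u < 0` the reflection `s ↦ -s` reduces to `integral_sqrt_expansion`. -/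
lemma liouville_green_sq {K : ℝ} {φ φ₁ φ₂ : ℝ → ℝ} (hK : 1 ≤ K) (h0 : φ 0 = 0) (h1 : φ₁ 0 = -1)
    (hφ : ∀ u, |u| ≤ 1 / 2 → HasDerivAt φ (φ₁ u) u ∧ HasDerivAt φ₁ (φ₂ u) u)
    (hb : |φ₂ 0| ≤ 2 * K)
    (h2 : ∀ u, |u| ≤ 1 / 2 → |φ₂ u - φ₂ 0| ≤ K * |u|) (u : ℝ) (hu0 : u ≠ 0)
    (hu : K * |u| ≤ 1 / 8) :
    ∃ S : ℝ, |S - (1 - 3 / 10 * (φ₂ 0 / 2) * u)| ≤ 9 / 2 * K ^ 2 * u ^ 2 ∧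
      ((3 / 2 : ℝ) * ∫ s in (0 : ℝ)..u, √|φ s|) ^ 2 = |u| ^ 3 * S ^ 2 := by
  have hb' : |φ₂ 0 / 2| ≤ K := by
    rw [abs_div, abs_of_pos (two_pos : (0 : ℝ) < 2)]; linarith
  have hT := fun v hv => (taylor_bounds h0 h1 hφ h2 v hv).2
  have hu1 : |u| ≤ 1 / 2 := by nlinarith [abs_nonneg u]
  have conclude : ∀ J v c : ℝ, 0 < v →
      |J - v * √v * (2 / 3 - c * v / 5)| ≤ 3 * K ^ 2 * v ^ 2 * (v * √v) →
      |J * (3 / 2) / (v * √v) - (1 - 3 / 10 * c * v)| ≤ 9 / 2 * K ^ 2 * v ^ 2 ∧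
      ((3 / 2 : ℝ) * J) ^ 2 = v ^ 3 * (J * (3 / 2) / (v * √v)) ^ 2 := by
    intro J v c hv hJ
    have hsv : 0 < √v := Real.sqrt_pos.mpr hv
    have hpos : 0 < v * √v := by positivity
    constructor
    · have e : J * (3 / 2) / (v * √v) - (1 - 3 / 10 * c * v)
          = (3 / 2) * (J - v * √v * (2 / 3 - c * v / 5)) / (v * √v) := by
        field_simp
        ring
      rw [e, abs_div, abs_of_pos hpos, div_le_iff₀ hpos, abs_mul, abs_of_pos (by norm_num)]
      nlinarith
    · have : v ^ 3 = (v * √v) ^ 2 := by rw [mul_pow, Real.sq_sqrt hv.le]; ring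
      rw [this]
      field_simp
  rcases lt_or_gt_of_ne hu0 with hneg | hpos
  · have hv : 0 < -u := by linarith
    have habs : |u| = -u := abs_of_neg hneg
    rw [habs] at hu hu1
    have := integral_sqrt_expansion (ψ := fun s => φ (-s)) (b := -(φ₂ 0 / 2)) hK hv hu
      (by rwa [abs_neg])
      (fun s hs => by
        have hs' : |(-s)| ≤ 1 / 2 := by rw [abs_neg, abs_of_nonneg hs.1]; linarith [hs.2]
        have : ContinuousAt (fun s => φ (-s)) s :=
          ContinuousAt.comp (f := fun s : ℝ => -s) (hφ (-s) hs').1.continuousAt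
            continuous_neg.continuousAt
        exact this.continuousWithinAt)
      (fun s hs => by
        have hs' : |(-s)| ≤ 1 / 2 := by rw [abs_neg, abs_of_nonneg hs.1]; linarith [hs.2]
        have h3 := hT (-s) hs'
        rw [abs_neg s, abs_of_nonneg hs.1] at h3
        convert h3 using 2
        ring)
    have hint : ∫ s in (0 : ℝ)..u, √|φ s| = -∫ s in (0 : ℝ)..(-u), √|φ (-s)| := by
      rw [integral_comp_neg (fun s => √|φ s|), integral_symm]
      simp
    obtain ⟨c1, c2⟩ := conclude _ _ _ hv this
    refine ⟨(∫ s in (0 : ℝ)..(-u), √|φ (-s)|) * (3 / 2) / (-u * √(-u)), ?_,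
      by rw [hint, habs, mul_neg, neg_sq]; exact c2⟩
    convert c1 using 2
    · ring
    · ring
  · have habs : |u| = u := abs_of_pos hpos
    rw [habs] at hu hu1 ⊢
    have := integral_sqrt_expansion (ψ := fun s => -φ s) (b := φ₂ 0 / 2) hK hpos hu hb'
      (fun s hs => by
        have hs' : |s| ≤ 1 / 2 := by rw [abs_of_nonneg hs.1]; linarith [hs.2]
        exact (hφ s hs').1.continuousAt.neg.continuousWithinAt)
      (fun s hs => by
        have hs' : |s| ≤ 1 / 2 := by rw [abs_of_nonneg hs.1]; linarith [hs.2]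
        have h3 := hT s hs'
        rw [abs_of_nonneg hs.1, ← abs_neg] at h3
        convert h3 using 2
        ring)
    simp only [abs_neg] at this
    exact ⟨_, conclude _ _ _ hpos this⟩

lemma bracket_le_of_numerator_le {C u P Q S y : ℝ} (hu0 : u ≠ 0) (hP : 1 / 2 ≤ P)
    (hS : 1 / 2 ≤ S)
    (hN : |5 * Q ^ 2 * S ^ 2 + 4 * u * y * P * S ^ 2 - 5 * P ^ 3| ≤ C * u ^ 2) :
    |5 * (-Q / -(u * P)) ^ 2 - 4 * (y / -(u * P)) - 5 * (-(u * P) / -(u ^ 3 * S ^ 2))|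
      ≤ 16 * C := by
  have hu2 : 0 < u ^ 2 := by positivity
  have hP0 : P ≠ 0 := by linarith
  have hS0 : S ≠ 0 := by linarith
  rw [show 5 * (-Q / -(u * P)) ^ 2 - 4 * (y / -(u * P)) - 5 * (-(u * P) / -(u ^ 3 * S ^ 2))
    = (5 * Q ^ 2 * S ^ 2 + 4 * u * y * P * S ^ 2 - 5 * P ^ 3) / (u ^ 2 * (P ^ 2 * S ^ 2)) by
      field_simp; ring]
  have hden : 0 < u ^ 2 * (P ^ 2 * S ^ 2) := by positivity
  rw [abs_div, abs_of_pos hden, div_le_iff₀ hden]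
  refine hN.trans ?_
  have hC0 : 0 ≤ C := nonneg_of_mul_nonneg_left ((abs_nonneg _).trans hN) hu2
  have hPS : 1 / 16 ≤ P ^ 2 * S ^ 2 := by
    have : 1 / 4 ≤ P * S := by nlinarith
    rw [← mul_pow]; nlinarith
  have := mul_le_mul_of_nonneg_left hPS (mul_nonneg hC0 hu2.le)
  linarith

/-- At a turning point normalized by `φ(0) = 0`, `φ'(0) = -1`, the expression
`5 (φ'/φ)² - 4 φ''/φ - 5 φ/ζ³` is bounded by a constant depending on `K` only. -/
lemma normalized_bracket_bounded {K : ℝ} (hK : 1 ≤ K) : ∃ C : ℝ, ∀ φ φ₁ φ₂ : ℝ → ℝ, φ 0 = 0 →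
    φ₁ 0 = -1 →
    (∀ u, |u| ≤ 1 / 2 → HasDerivAt φ (φ₁ u) u ∧ HasDerivAt φ₁ (φ₂ u) u) →
    |φ₂ 0| ≤ 2 * K →
    (∀ u, |u| ≤ 1 / 2 → |φ₂ u - φ₂ 0| ≤ K * |u|) →
    ∀ u, u ≠ 0 → K * |u| ≤ 1 / 8 →
      |u| / 2 ≤ |φ u| ∧
      |5 * (φ₁ u / φ u) ^ 2 - 4 * (φ₂ u / φ u)
        - 5 * (φ u / (-Real.sign u * ((3 / 2 : ℝ) * ∫ s in (0 : ℝ)..u, √|φ s|) ^ 2))| ≤ C := by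
  obtain ⟨C, hC⟩ := remainder_bounded (5 * K ^ 2)
  refine ⟨16 * C, fun φ φ₁ φ₂ h0 h1 hφ hb h2 u hu0 hu => ?_⟩
  obtain ⟨S, hS, hJ⟩ := liouville_green_sq hK h0 h1 hφ hb h2 u hu0 hu
  have hua : 0 < |u| := abs_pos.mpr hu0
  have hu1 : |u| ≤ 1 / 8 := by nlinarith
  obtain ⟨t1, t0⟩ := taylor_bounds h0 h1 hφ h2 u (by linarith)
  have t2 := h2 u (by linarith)
  rw [hJ]
  obtain ⟨b, hbdef⟩ : ∃ b, φ₂ 0 = 2 * b := ⟨φ₂ 0 / 2, by ring⟩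
  rw [hbdef] at hS hb t1 t0 t2
  replace hb : |b| ≤ K := by
    rw [abs_mul, abs_of_pos (two_pos : (0 : ℝ) < 2)] at hb; linarith
  generalize φ u = y0 at *
  generalize φ₁ u = y1 at *
  generalize φ₂ u = y2 at *
  obtain ⟨e₀, he₀⟩ : ∃ e, y0 = -(u * (1 + u * (-b + e * u))) :=
    ⟨-(y0 - (-u + b * u ^ 2)) / u ^ 3, by field_simp; ring⟩
  obtain ⟨e₁, he₁⟩ : ∃ e, y1 = -(1 + u * (-2 * b + e * u)) :=
    ⟨-(y1 - (-1 + 2 * b * u)) / u ^ 2, by field_simp; ring⟩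
  obtain ⟨e₂, he₂⟩ : ∃ e, y2 = 2 * b + e * u := ⟨(y2 - 2 * b) / u, by field_simp; ring⟩
  obtain ⟨e, he⟩ : ∃ e, S = 1 + u * (-(3 / 10) * b + e * u) :=
    ⟨(S - (1 - 3 / 10 * b * u)) / u ^ 2, by field_simp; ring⟩
  have hu2 : 0 < u ^ 2 := by positivity
  have be₀ : |e₀| ≤ K := by
    rw [he₀, show -(u * (1 + u * (-b + e₀ * u))) - (-u + 2 * b / 2 * u ^ 2) = -(e₀ * u ^ 3) by ring,
      abs_neg, abs_mul, abs_pow] at t0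
    exact le_of_mul_le_mul_right t0 (by positivity)
  have be₁ : |e₁| ≤ K := by
    rw [he₁, show -(1 + u * (-2 * b + e₁ * u)) - (-1 + 2 * b * u) = -(e₁ * u ^ 2) by ring,
      abs_neg, abs_mul, abs_of_pos hu2] at t1
    exact le_of_mul_le_mul_right t1 hu2
  have be₂ : |e₂| ≤ K := by
    rw [he₂, add_sub_cancel_left, abs_mul] at t2
    exact le_of_mul_le_mul_right t2 hua
  have be : |e| ≤ 9 / 2 * K ^ 2 := by
    rw [he, show 1 + u * (-(3 / 10) * b + e * u) - (1 - 3 / 10 * (2 * b / 2) * u) = e * u ^ 2 by ring,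
      abs_mul, abs_of_pos hu2] at hS
    exact le_of_mul_le_mul_right hS hu2
  have hKL : K ≤ 5 * K ^ 2 := by nlinarith
  have hN := hC u b e₀ e₁ e₂ e (by nlinarith) (hb.trans hKL) (be₀.trans hKL) (be₁.trans hKL)
    (be₂.trans hKL) (by nlinarith)
  have hbu : |b * u| ≤ 1 / 8 := by
    rw [abs_mul]; exact (mul_le_mul_of_nonneg_right hb hua.le).trans hu
  have hP : 1 / 2 ≤ 1 + u * (-b + e₀ * u) := by
    have : |e₀ * u * u| ≤ 1 / 8 := by
      rw [abs_mul, abs_mul]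
      have h3 : |e₀| * |u| ≤ 1 / 8 := (mul_le_mul_of_nonneg_right be₀ hua.le).trans hu
      nlinarith
    linarith [(abs_le.mp this).1, (abs_le.mp hbu).2]
  have hSS : 1 / 2 ≤ 1 + u * (-(3 / 10) * b + e * u) := by
    have : |e * u * u| ≤ 1 / 8 := by
      rw [abs_mul, abs_mul]
      have : |e| * |u| * |u| ≤ 9 / 2 * K ^ 2 * |u| * |u| := by gcongr
      have h3 := mul_self_le_mul_self (by positivity) hu
      linarith
    linarith [(abs_le.mp this).1, (abs_le.mp hbu).2]
  have hsign : -Real.sign u * (|u| ^ 3 * S ^ 2) = -(u ^ 3 * S ^ 2) := by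
    have : Real.sign u * |u| = u := by
      rcases lt_or_gt_of_ne hu0 with h | h
      · rw [Real.sign_of_neg h, abs_of_neg h]; ring
      · rw [Real.sign_of_pos h, abs_of_pos h]; ring
    rw [pow_succ', sq_abs]
    linear_combination (-u ^ 2 * S ^ 2) * this
  rw [hsign]
  constructor
  · rw [he₀, abs_neg, abs_mul, abs_of_pos (by linarith : 0 < 1 + u * (-b + e₀ * u))]
    have := mul_le_mul_of_nonneg_left hP hua.le
    linarith
  · rw [← he] at hN hSS
    rw [← he₂] at hN
    rw [he₀, he₁]
    exact bracket_le_of_numerator_le hu0 hP hSS hN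

/-! ### Scaling to the actual turning point -/

lemma integral_abs_rpow_neg_half (R d : ℝ) (hd : 0 < d) :
    IntegrableOn (fun r => |r - R| ^ (-(1 : ℝ) / 2)) (Ioo (R - d) (R + d)) ∧
    ∫ r in Ioo (R - d) (R + d), |r - R| ^ (-(1 : ℝ) / 2) = 4 * √d := by
  have hpos : IntervalIntegrable (fun x : ℝ => |x| ^ (-(1 : ℝ) / 2)) volume 0 d := by
    refine (intervalIntegrable_rpow' (r := -(1 : ℝ) / 2) (by norm_num)).congr ?_
    intro x hx
    rw [uIoc_of_le hd.le] at hx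
    simp only [abs_of_pos hx.1]
  have hneg : IntervalIntegrable (fun x : ℝ => |x| ^ (-(1 : ℝ) / 2)) volume (-d) 0 := by
    have := ((IntervalIntegrable.iff_comp_neg (by simp)).mp hpos).symm
    simpa using this
  have vpos : ∫ x in (0 : ℝ)..d, |x| ^ (-(1 : ℝ) / 2) = 2 * √d := by
    rw [integral_congr (g := fun x : ℝ => x ^ (-(1 : ℝ) / 2)) (fun x hx => by
      rw [uIcc_of_le hd.le] at hx
      simp only [abs_of_nonneg hx.1]), integral_rpow (Or.inl (by norm_num)), Real.sqrt_eq_rpow]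
    norm_num
    ring
  have vneg : ∫ x in (-d)..(0 : ℝ), |x| ^ (-(1 : ℝ) / 2) = 2 * √d := by
    rw [← vpos]
    have := integral_comp_neg (a := 0) (b := d) (fun x : ℝ => |x| ^ (-(1 : ℝ) / 2))
    simpa using this.symm
  have htot : IntervalIntegrable (fun r => |r - R| ^ (-(1 : ℝ) / 2)) volume (R - d) (R + d) := by
    have := (hneg.trans hpos).comp_sub_right R
    convert this using 1 <;> ring
  have hle : R - d ≤ R + d := by linarith
  constructor
  · exact ((intervalIntegrable_iff_integrableOn_Ioc_of_le hle).mp htot).mono_set Ioo_subset_Ioc_self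
  · rw [← integral_Ioc_eq_integral_Ioo, ← integral_of_le hle,
      integral_comp_sub_right (fun x : ℝ => |x| ^ (-(1 : ℝ) / 2)),
      show R - d - R = -d by ring, show R + d - R = d by ring,
      ← integral_add_adjacent_intervals hneg hpos, vpos, vneg]
    ring

/-- `ζ⁻³` in terms of the phase integral `x`. Since `sign(t)³ = sign(t)`, this holds for `t = 0`
as well, both sides being `0⁻¹ = 0`. -/
lemma signed_rpow_zpow_neg_three (t x : ℝ) :
    (Real.sign t * |x| ^ ((2 : ℝ) / 3)) ^ (-3 : ℤ) = (Real.sign t * x ^ 2)⁻¹ := by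
  have h1 : (|x| ^ ((2 : ℝ) / 3)) ^ 3 = x ^ 2 := by
    rw [← Real.rpow_natCast, ← Real.rpow_mul (abs_nonneg x), ← sq_abs x, ← Real.rpow_natCast]
    norm_num
  have h2 : Real.sign t ^ 3 = Real.sign t := by
    rcases Real.sign_apply_eq t with h | h | h <;> rw [h] <;> norm_num
  rw [zpow_neg, show (3 : ℤ) = ((3 : ℕ) : ℤ) from rfl, zpow_natCast, mul_pow, h1, h2]

/-- Scale-invariant form of the bound `|G(r)| ≤ C R^(-1/2) |r - R|^(-1/2)`. The hypotheses on `F₂`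
and `F₃` say that `φ(u) = F(R + R u) / (-F'(R) R)` satisfies `|φ''(0)| ≤ 2 K` and
`|φ'''| ≤ K` for `u ≥ -1/2`. -/
lemma pointwise_bound {K κ : ℝ} (hK : 1 ≤ K) (hκ : 0 < κ) : ∃ C > (0 : ℝ),
    ∀ (F F₁ F₂ F₃ : ℝ → ℝ) (R : ℝ), 0 < R → F R = 0 →
    (∀ r > 0, HasDerivAt F (F₁ r) r ∧ HasDerivAt F₁ (F₂ r) r ∧ HasDerivAt F₂ (F₃ r) r) →
    κ ≤ -F₁ R * R ^ 3 → |F₂ R| * R ≤ 2 * K * -F₁ R →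
    (∀ r ≥ R / 2, |F₃ r| * R ^ 2 ≤ K * -F₁ R) →
    ∀ r ≠ R, K * |r - R| ≤ R / 8 →
      abs (|F r| ^ (-(1 : ℝ) / 2) * (5 * F r ^ (-2 : ℤ) * F₁ r ^ 2 - 4 * (F r)⁻¹ * F₂ r
        - 16 * (-(1 / (4 * r ^ 2)))
        - 5 * F r * (Real.sign (R - r) *
          abs (3 / 2 * ∫ s in R..r, √|F s|) ^ ((2 : ℝ) / 3)) ^ (-3 : ℤ)))
      ≤ C * (√R)⁻¹ * |r - R| ^ (-(1 : ℝ) / 2) := by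
  obtain ⟨C, hC⟩ := normalized_bracket_bounded hK
  refine ⟨(κ / 2) ^ (-(1 : ℝ) / 2) * (|C| + 16), by positivity, ?_⟩
  intro F F₁ F₂ F₃ R hR hF0 hF hκR hb hK3 r hr hrK
  obtain ⟨D, hD⟩ : ∃ D, D = -F₁ R := ⟨_, rfl⟩
  rw [← hD] at hκR hb hK3
  have hD0 : 0 < D := by
    have := hκ.trans_le hκR
    exact (pos_iff_pos_of_mul_pos this).mpr (by positivity)
  obtain ⟨u, rfl⟩ : ∃ u, r = R + R * u := ⟨(r - R) / R, by field_simp; ring⟩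
  have hu0 : u ≠ 0 := by rintro rfl; simp at hr
  have hu : K * |u| ≤ 1 / 8 := by
    rw [add_sub_cancel_left, abs_mul, abs_of_pos hR] at hrK
    by_contra! hcon
    nlinarith
  have hu1 : |u| ≤ 1 / 8 := by nlinarith [abs_nonneg u]
  have hposv : ∀ v : ℝ, |v| ≤ 1 / 2 → R / 2 ≤ R + R * v := fun v hv => by
    nlinarith [(abs_le.mp hv).1]
  have hlin : ∀ v : ℝ, HasDerivAt (fun v : ℝ => R + R * v) R v := fun v => by
    simpa using ((hasDerivAt_id v).const_mul R).const_add R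
  have hφ : ∀ v, |v| ≤ 1 / 2 →
      HasDerivAt (fun v => F (R + R * v) / (D * R)) (F₁ (R + R * v) / D) v ∧
      HasDerivAt (fun v => F₁ (R + R * v) / D) (R * F₂ (R + R * v) / D) v := by
    intro v hv
    have hp : 0 < R + R * v := by linarith [hposv v hv]
    constructor
    · refine (((hF _ hp).1.comp v (hlin v)).div_const (D * R)).congr_deriv ?_
      field_simp
    · refine (((hF _ hp).2.1.comp v (hlin v)).div_const D).congr_deriv ?_
      ring
  have hb' : |R * F₂ (R + R * 0) / D| ≤ 2 * K := by
    rw [abs_div, abs_mul, abs_of_pos hR, abs_of_pos hD0, div_le_iff₀ hD0]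
    simp only [mul_zero, add_zero]
    linarith
  have h2 : ∀ v, |v| ≤ 1 / 2 →
      |R * F₂ (R + R * v) / D - R * F₂ (R + R * 0) / D| ≤ K * |v| := by
    intro v hv
    have := (convex_Icc (-(1 / 2) : ℝ) (1 / 2)).norm_image_sub_le_of_norm_hasDerivWithin_le
      (f := fun v => R * F₂ (R + R * v) / D) (f' := fun v => R ^ 2 * F₃ (R + R * v) / D)
      (C := K) (x := 0) (y := v)
      (fun x hx => by
        have hp : 0 < R + R * x := by linarith [hposv x (abs_le.mpr hx)]
        refine (((((hF _ hp).2.2.comp x (hlin x)).const_mul R).div_const D).congr_deriv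
          ?_).hasDerivWithinAt
        ring)
      (fun x hx => by
        rw [Real.norm_eq_abs, abs_div, abs_mul, abs_of_pos hD0, div_le_iff₀ hD0, abs_of_pos (by positivity)]
        linarith [hK3 _ (hposv x (abs_le.mpr hx))])
      (by norm_num) (abs_le.mp hv)
    simpa using this
  obtain ⟨hlow, hbr⟩ := hC _ _ _ (by simp [hF0])
    (by simp only [mul_zero, add_zero]; rw [div_eq_iff hD0.ne']; linarith) hφ hb' h2 u hu0 hu
  have hDR : 0 < D * R := by positivity
  have hint : ∫ s in R..(R + R * u), √|F s|
      = R * √(D * R) * ∫ v in (0 : ℝ)..u, √|F (R + R * v) / (D * R)| := by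
    have h1 := smul_integral_comp_add_mul (a := 0) (b := u) (fun s => √|F s|) R R
    simp only [mul_zero, add_zero, smul_eq_mul] at h1
    rw [← h1, mul_assoc, ← intervalIntegral.integral_const_mul (√(D * R))]
    congr 2
    funext v
    rw [← Real.sqrt_mul hDR.le, abs_div, abs_of_pos hDR, mul_div_cancel₀ _ hDR.ne']
  have hsgn : Real.sign (R - (R + R * u)) = -Real.sign u := by
    rcases lt_or_gt_of_ne hu0 with h | h
    · rw [Real.sign_of_neg h, Real.sign_of_pos (by nlinarith)]; ring
    · rw [Real.sign_of_pos h, Real.sign_of_neg (by nlinarith)]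
  rw [signed_rpow_zpow_neg_three, hint, hsgn]
  generalize (∫ v in (0 : ℝ)..u, √|F (R + R * v) / (D * R)|) = J at *
  have hJ : (3 / 2 * (R * √(D * R) * J)) ^ 2 = D * R ^ 3 * (3 / 2 * J) ^ 2 := by
    have := Real.sq_sqrt hDR.le
    linear_combination (9 / 4 * R ^ 2 * J ^ 2) * this
  rw [hJ]
  have hF0' : F (R + R * u) ≠ 0 := by
    intro h0
    rw [h0] at hlow
    simp at hlow
    linarith [abs_pos.mpr hu0]
  have hFlow : κ / 2 * (R ^ 3)⁻¹ * |R + R * u - R| ≤ |F (R + R * u)| := by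
    rw [abs_div, abs_of_pos hDR, le_div_iff₀ hDR] at hlow
    refine le_trans ?_ hlow
    rw [add_sub_cancel_left, abs_mul, abs_of_pos hR]
    have : κ * (R ^ 3)⁻¹ ≤ D := by
      rw [← div_eq_mul_inv, div_le_iff₀ (by positivity)]; exact hκR
    have h3 := mul_le_mul_of_nonneg_right this (by positivity : 0 ≤ R * |u| / 2)
    linarith
  have habs : 0 < |R + R * u - R| := abs_pos.mpr (sub_ne_zero.mpr hr)
  have hFpow : |F (R + R * u)| ^ (-(1 : ℝ) / 2)
      ≤ (κ / 2) ^ (-(1 : ℝ) / 2) * (R ^ 2 * (√R)⁻¹) * |R + R * u - R| ^ (-(1 : ℝ) / 2) := by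
    refine (Real.rpow_le_rpow_of_nonpos (by positivity) hFlow (by norm_num)).trans (le_of_eq ?_)
    rw [Real.mul_rpow (by positivity) (by positivity), Real.mul_rpow (by positivity) (by positivity)]
    congr 2
    rw [Real.inv_rpow (by positivity), ← Real.rpow_neg (by positivity), ← Real.rpow_natCast,
      ← Real.rpow_mul hR.le, Real.sqrt_eq_rpow, ← Real.rpow_neg hR.le, ← Real.rpow_natCast,
      ← Real.rpow_add hR]
    norm_num
  have hbracket : |5 * F (R + R * u) ^ (-2 : ℤ) * F₁ (R + R * u) ^ 2
      - 4 * (F (R + R * u))⁻¹ * F₂ (R + R * u) - 16 * (-(1 / (4 * (R + R * u) ^ 2)))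
      - 5 * F (R + R * u) * (-Real.sign u * (D * R ^ 3 * (3 / 2 * J) ^ 2))⁻¹|
      ≤ (R ^ 2)⁻¹ * (|C| + 16) := by
    have e : 5 * F (R + R * u) ^ (-2 : ℤ) * F₁ (R + R * u) ^ 2
      - 4 * (F (R + R * u))⁻¹ * F₂ (R + R * u) - 16 * (-(1 / (4 * (R + R * u) ^ 2)))
      - 5 * F (R + R * u) * (-Real.sign u * (D * R ^ 3 * (3 / 2 * J) ^ 2))⁻¹
      = (R ^ 2)⁻¹ * ((5 * (F₁ (R + R * u) / D / (F (R + R * u) / (D * R))) ^ 2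
        - 4 * (R * F₂ (R + R * u) / D / (F (R + R * u) / (D * R)))
        - 5 * (F (R + R * u) / (D * R) / (-Real.sign u * (3 / 2 * J) ^ 2)))
        + 4 * ((1 + u) ^ 2)⁻¹) := by
      have e1 : (-Real.sign u * (D * R ^ 3 * (3 / 2 * J) ^ 2))⁻¹
          = (D * R ^ 3)⁻¹ * (-Real.sign u * (3 / 2 * J) ^ 2)⁻¹ := by
        rw [← mul_inv]; congr 1; ring
      have hu1' : 1 + u ≠ 0 := by linarith [(abs_le.mp hu1).1]
      rw [e1, div_eq_mul_inv (F (R + R * u) / (D * R))]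
      generalize (-Real.sign u * (3 / 2 * J) ^ 2)⁻¹ = Z at *
      rw [show R + R * u = R * (1 + u) by ring] at *
      generalize F (R * (1 + u)) = y0 at *
      rw [zpow_neg, show (2 : ℤ) = ((2 : ℕ) : ℤ) from rfl, zpow_natCast]
      field_simp
      ring
    rw [e, abs_mul, abs_of_pos (by positivity : 0 < (R ^ 2)⁻¹)]
    gcongr
    refine (abs_add_le _ _).trans (add_le_add (hbr.trans (le_abs_self C)) ?_)
    have h1u : 1 / 2 ≤ 1 + u := by linarith [(abs_le.mp hu1).1]
    rw [abs_of_nonneg (by positivity), ← div_eq_mul_inv, div_le_iff₀ (by positivity)]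
    nlinarith
  rw [abs_mul, abs_of_nonneg (by positivity : 0 ≤ |F (R + R * u)| ^ (-(1 : ℝ) / 2))]
  refine (mul_le_mul hFpow hbracket (abs_nonneg _) (by positivity)).trans (le_of_eq ?_)
  field_simp

/-! ### Uniform estimates for the potential -/

/-- Nondegeneracy `-R³ V_{m'}'(R) ≥ κ m` and the lower bound `R ≥ c √m`. For `m` large compared to
`C_V` the centrifugal term `m'/r²` dominates. For the remaining `m` the turning points lie in a
compact interval, on which `V_M'` is bounded away from `0`. -/
lemma turning_point_bounds {V₀ V₁ : ℝ → ℝ} {C_V M r₂ Ea Eb : ℝ}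
    (hM : 0 < M) (hr₂ : 0 < r₂) (hEa : 0 < Ea) (hEab : Ea ≤ Eb)
    (hb0 : ∀ r > 0, |r ^ 2 * V₀ r| ≤ C_V) (hb1 : ∀ r > 0, |r ^ 3 * V₁ r| ≤ C_V)
    (hc : ContinuousOn V₁ (Ioi 0)) (hmono : ∀ r ≥ r₂, V₁ r - 2 * M / r ^ 3 < 0) :
    ∃ κ > (0 : ℝ), ∃ c > (0 : ℝ), ∀ m ≥ M, ∀ m', m ≤ m' → m' ≤ m + 1 → ∀ E ∈ Icc Ea Eb,
      ∀ R ≥ r₂, V₀ R + m' / R ^ 2 = E → κ * m ≤ 2 * m' - R ^ 3 * V₁ R ∧ c * √m ≤ R := by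
  have hC : 0 ≤ C_V := (abs_nonneg _).trans (hb0 1 one_pos)
  have hEb : 0 < Eb := hEa.trans_le hEab
  obtain ⟨k, hk0, hk⟩ := (isCompact_Icc (a := r₂) (b := √((2 * C_V + 1) / Ea))).exists_forall_le'
    (f := fun r => 2 * M - r ^ 3 * V₁ r) (a := 0)
    (by
      have : ContinuousOn V₁ (Icc r₂ (√((2 * C_V + 1) / Ea))) :=
        hc.mono fun x hx => hr₂.trans_le hx.1
      fun_prop)
    (fun r hr => by
      have h0 : 0 < r := hr₂.trans_le hr.1
      have h1 := hmono r hr.1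
      rw [sub_neg, lt_div_iff₀ (by positivity)] at h1
      linarith)
  refine ⟨min 1 (k / (C_V + 1)), by positivity,
    √(min (1 / (2 * Eb)) (r₂ ^ 2 / (2 * C_V + 1))), by positivity, ?_⟩
  intro m hm m' hm1 hm2 E hE R hRr hRE
  have hR : 0 < R := hr₂.trans_le hRr
  have hm0 : 0 < m := hM.trans_le hm
  have hER : R ^ 2 * V₀ R + m' = E * R ^ 2 := by rw [← hRE]; field_simp
  have h0 := abs_le.mp (hb0 R hR)
  have h1 := abs_le.mp (hb1 R hR)
  constructor
  -- `2 m' - R³ V₁(R) ≥ 2 m - C_V` settles `m ≥ C_V`; otherwise `R` lies in the compact interval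
  · rcases le_total C_V m with h | h
    · have : min 1 (k / (C_V + 1)) * m ≤ 1 * m := by gcongr; exact min_le_left _ _
      linarith
    · have hRle : R ≤ √((2 * C_V + 1) / Ea) := by
        apply Real.le_sqrt_of_sq_le
        rw [le_div_iff₀ hEa]
        nlinarith [hE.1, sq_nonneg R]
      have h3 := hk R ⟨hRr, hRle⟩
      have : min 1 (k / (C_V + 1)) * m ≤ k / (C_V + 1) * (C_V + 1) := by
        gcongr
        · exact min_le_right _ _
        · linarith
      rw [div_mul_cancel₀ _ (by positivity)] at this
      linarith
  · rw [← Real.sqrt_mul (by positivity)]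
    refine Real.sqrt_le_iff.mpr ⟨hR.le, ?_⟩
    -- for `m ≥ 2 C_V`, `Eb R² ≥ m - C_V ≥ m / 2`; otherwise `R ≥ r₂` is enough
    rcases le_total (2 * C_V) m with h | h
    · have : min (1 / (2 * Eb)) (r₂ ^ 2 / (2 * C_V + 1)) * m ≤ 1 / (2 * Eb) * m := by
        gcongr; exact min_le_left _ _
      refine this.trans ?_
      rw [one_div, inv_mul_le_iff₀ (by positivity)]
      nlinarith [hE.2, sq_nonneg R]
    · have : min (1 / (2 * Eb)) (r₂ ^ 2 / (2 * C_V + 1)) * m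
          ≤ r₂ ^ 2 / (2 * C_V + 1) * (2 * C_V + 1) := by
        gcongr
        · exact min_le_right _ _
        · linarith
      rw [div_mul_cancel₀ _ (by positivity)] at this
      exact this.trans (by gcongr)

/-- Since `V₀ = W / r²` on `(0,∞)`, its iterated derivatives up to order three are genuine
derivatives there. -/
lemma hasDerivAt_of_extension {V₀ : ℝ → ℝ}
    (hext : ∃ W : ℝ → ℝ, ContDiffOn ℝ 3 W (Set.Ici 0) ∧ ∀ r > 0, W r = r ^ 2 * V₀ r) :
    ∀ r > 0, HasDerivAt V₀ (iteratedDeriv 1 V₀ r) r ∧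
      HasDerivAt (iteratedDeriv 1 V₀) (iteratedDeriv 2 V₀ r) r ∧
      HasDerivAt (iteratedDeriv 2 V₀) (iteratedDeriv 3 V₀ r) r := by
  obtain ⟨W, hW, hWV⟩ := hext
  have h3 : ContDiffOn ℝ 3 V₀ (Ioi 0) := by
    have : ContDiffOn ℝ 3 (fun r => W r / r ^ 2) (Ioi 0) :=
      (hW.mono Ioi_subset_Ici_self).div (by fun_prop) (fun r (hr : 0 < r) => by positivity)
    refine this.congr fun r (hr : 0 < r) => ?_
    rw [hWV r hr]
    field_simp
  have h2 : ContDiffOn ℝ 2 (deriv V₀) (Ioi 0) := h3.deriv_of_isOpen isOpen_Ioi (by norm_num)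
  have h1 : ContDiffOn ℝ 1 (deriv (deriv V₀)) (Ioi 0) :=
    h2.deriv_of_isOpen isOpen_Ioi (by norm_num)
  have e1 : iteratedDeriv 1 V₀ = deriv V₀ := iteratedDeriv_one
  have e2 : iteratedDeriv 2 V₀ = deriv (deriv V₀) := by rw [iteratedDeriv_succ, e1]
  have e3 : iteratedDeriv 3 V₀ = deriv (deriv (deriv V₀)) := by rw [iteratedDeriv_succ, e2]
  intro r hr
  have hn : Ioi (0 : ℝ) ∈ nhds r := Ioi_mem_nhds hr
  rw [e1, e2, e3]
  exact ⟨((h3.contDiffAt hn).differentiableAt (by norm_num)).hasDerivAt,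
    ((h2.contDiffAt hn).differentiableAt (by norm_num)).hasDerivAt,
    ((h1.contDiffAt hn).differentiableAt (by norm_num)).hasDerivAt⟩

lemma hasDerivAt_const_div_pow (a : ℝ) (n : ℕ) {x : ℝ} (hx : x ≠ 0) :
    HasDerivAt (fun s => a / s ^ n) (-(a * n) / x ^ (n + 1)) x := by
  have := (hasDerivAt_const x a).fun_div (hasDerivAt_pow n x) (pow_ne_zero n hx)
  refine this.congr_deriv ?_
  rcases n with _ | n
  · simp
  · simp only [Nat.add_sub_cancel]
    field_simp
    ring

/-- Olver error-control integral near the turning point: there exist `δ > 0` and `C > 0`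
such that `∫_{R−δ√m}^{R+δ√m} |G(r)| dr ≤ C` (over `r ≠ R`), uniformly for `h ∈ (0,1]`,
`m ≥ M`, `E ∈ I`. -/
theorem G_integral_near_turning_point
    (V₀ : ℝ → ℝ)
    (hext : ∃ W : ℝ → ℝ, ContDiffOn ℝ 3 W (Set.Ici 0) ∧ ∀ r > 0, W r = r ^ 2 * V₀ r)
    (C_V : ℝ)
    (hCV : ∀ k : ℕ, k ≤ 3 → ∀ r > 0, |r ^ (2 + k) * iteratedDeriv k V₀ r| ≤ C_V)
    (M r₂ : ℝ) (hM : 0 < M) (hr₂pos : 0 < r₂)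
    (I : Set ℝ) (hI : ∃ Ea Eb : ℝ, 0 < Ea ∧ Ea ≤ Eb ∧ I = Set.Icc Ea Eb)
    (hmono : ∀ r ≥ r₂, deriv (fun s => V₀ s + M / s ^ 2) r < 0)
    (hbarrier : ∀ E ∈ I, ∀ r ∈ Set.Ioo (0:ℝ) r₂, E < V₀ r + M / r ^ 2)
    (hlim : ∃ L : ℝ, Filter.Tendsto (fun r => r ^ 2 * V₀ r)
      (nhdsWithin 0 (Set.Ioi 0)) (nhds L) ∧ 0 < L + M)
    (R : ℝ → ℝ → ℝ → ℝ)
    (hR : ∀ h ∈ Set.Ioc (0:ℝ) 1, ∀ m ≥ M, ∀ E ∈ I,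
      r₂ ≤ R h m E ∧ V₀ (R h m E) + (m + h ^ 2 / 4) / (R h m E) ^ 2 = E ∧
      (∀ r ∈ Set.Ioo 0 (R h m E), E < V₀ r + (m + h ^ 2 / 4) / r ^ 2) ∧
      (∀ r ∈ Set.Ioi (R h m E), V₀ r + (m + h ^ 2 / 4) / r ^ 2 < E))
    (f : ℝ → ℝ → ℝ → ℝ → ℝ)
    (hf : ∀ h m E r, f h m E r = m⁻¹ * (V₀ r + (m + h ^ 2 / 4) / r ^ 2 - E))
    (g : ℝ → ℝ) (hg : ∀ r, g r = -(1 / (4 * r ^ 2)))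
    (ζO : ℝ → ℝ → ℝ → ℝ → ℝ)
    (hζO : ∀ h m E r, ζO h m E r = Real.sign (R h m E - r) *
      (abs ((3/2 : ℝ) * ∫ s in (R h m E)..r, Real.sqrt (abs (f h m E s)))) ^ ((2:ℝ)/3))
    (G : ℝ → ℝ → ℝ → ℝ → ℝ)
    (hG : ∀ h m E r, G h m E r = (abs (f h m E r)) ^ (-(1:ℝ)/2) *
      (5 * (f h m E r) ^ (-2 : ℤ) * (deriv (f h m E) r) ^ 2
        - 4 * (f h m E r)⁻¹ * deriv (deriv (f h m E)) r
        - 16 * g r - 5 * f h m E r * (ζO h m E r) ^ (-3 : ℤ)))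
    :
    ∃ δ > (0:ℝ), ∃ C > (0:ℝ), ∀ h ∈ Set.Ioc (0:ℝ) 1, ∀ m ≥ M, ∀ E ∈ I,
      ∫ r in Set.Ioo (R h m E - δ * Real.sqrt m) (R h m E + δ * Real.sqrt m) \ {R h m E},
        |G h m E r| ≤ C := by
  obtain ⟨Ea, Eb, hEa, hEab, rfl⟩ := hI
  have hV := hasDerivAt_of_extension hext
  have hV0 : ∀ r > 0, |r ^ 2 * V₀ r| ≤ C_V := fun r hr => by simpa using hCV 0 (by norm_num) r hr
  have hV1 := fun r hr => hCV 1 (by norm_num) r hr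
  have hV2 := fun r hr => hCV 2 (by norm_num) r hr
  have hV3 := fun r hr => hCV 3 (by norm_num) r hr
  norm_num only at hV1 hV2 hV3
  have hCV0 : 0 ≤ C_V := (abs_nonneg _).trans (hV0 1 one_pos)
  obtain ⟨κ, hκ, c, hc, hturn⟩ := turning_point_bounds (V₁ := iteratedDeriv 1 V₀) hM hr₂pos hEa hEab
    hV0 hV1 (fun r hr => (hV r hr).2.1.continuousAt.continuousWithinAt) (fun r hr => by
      have h0 : 0 < r := hr₂pos.trans_le hr
      have h1 := hmono r hr
      rw [((hV r h0).1.fun_add (hasDerivAt_const_div_pow M 2 h0.ne')).deriv] at h1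
      have e : -(M * ((2 : ℕ) : ℝ)) / r ^ (2 + 1) = -(2 * M / r ^ 3) := by push_cast; ring
      rw [e] at h1
      linarith)
  -- `32 = 2⁵` is the loss in passing from `r ≥ R / 2` to `R` in the bound for `r⁵ f'''(r)`
  obtain ⟨A, hA⟩ : ∃ A, A = 32 * (C_V / M + 24 * (1 + 1 / (4 * M))) := ⟨_, rfl⟩
  have hA0 : 0 < A := by rw [hA]; positivity
  set K : ℝ := max 1 (A / κ) with hKdef
  have hK : 1 ≤ K := le_max_left _ _
  have hK0 : 0 < K := one_pos.trans_le hK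
  have hAK : A ≤ K * κ := by rw [← div_le_iff₀ hκ]; exact le_max_right _ _
  obtain ⟨C, hC, hpt⟩ := pointwise_bound hK hκ
  -- with this `δ`, `|r - R| < δ √m` and `c √m ≤ R` give `K |r - R| ≤ R / 8`
  refine ⟨c / (8 * K), by positivity, C * (4 * √(1 / (8 * K))), by positivity, ?_⟩
  intro h hh m hm E hE
  have hm0 : 0 < m := hM.trans_le hm
  obtain ⟨hRr, hRE, -, -⟩ := hR h hh m hm E hE
  have hh2 : h ^ 2 ≤ 1 := by nlinarith [hh.1, hh.2]
  obtain ⟨hκm, hcR⟩ := hturn m hm (m + h ^ 2 / 4) (by nlinarith [sq_nonneg h]) (by linarith) E hE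
    _ hRr hRE
  generalize hρ : R h m E = ρ at *
  have hρ0 : 0 < ρ := hr₂pos.trans_le hRr
  obtain ⟨m', hm'⟩ : ∃ m', m' = m + h ^ 2 / 4 := ⟨_, rfl⟩
  rw [← hm'] at hRE hκm
  -- the three derivatives of `f h m E`
  let F₁ : ℝ → ℝ := fun r => m⁻¹ * (iteratedDeriv 1 V₀ r - 2 * m' / r ^ 3)
  let F₂ : ℝ → ℝ := fun r => m⁻¹ * (iteratedDeriv 2 V₀ r + 6 * m' / r ^ 4)
  let F₃ : ℝ → ℝ := fun r => m⁻¹ * (iteratedDeriv 3 V₀ r - 24 * m' / r ^ 5)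
  have hfeq : f h m E = fun r => m⁻¹ * (V₀ r + m' / r ^ 2 - E) := by
    funext r; rw [hf, hm']
  have hF : ∀ r > 0, HasDerivAt (f h m E) (F₁ r) r ∧ HasDerivAt F₁ (F₂ r) r ∧
      HasDerivAt F₂ (F₃ r) r := by
    intro r hr
    obtain ⟨d0, d1, d2⟩ := hV r hr
    refine ⟨?_, ?_, ?_⟩
    · rw [hfeq]
      refine (((d0.add (hasDerivAt_const_div_pow m' 2 hr.ne')).sub_const E).const_mul
        m⁻¹).congr_deriv ?_
      simp only [F₁]; push_cast; ring
    · refine ((d1.sub (hasDerivAt_const_div_pow (2 * m') 3 hr.ne')).const_mul m⁻¹).congr_deriv ?_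
      simp only [F₂]; push_cast; ring
    · refine ((d2.add (hasDerivAt_const_div_pow (6 * m') 4 hr.ne')).const_mul m⁻¹).congr_deriv ?_
      simp only [F₃]; push_cast; ring
  have hm'0 : 0 < m' := by rw [hm']; positivity
  have hm'le : m⁻¹ * m' ≤ 1 + 1 / (4 * M) := by
    rw [inv_mul_le_iff₀ hm0, hm']
    have : 1 ≤ m / M := by rwa [one_le_div hM]
    have e : m * (1 + 1 / (4 * M)) = m + m / M / 4 := by field_simp
    linarith
  have hCm : m⁻¹ * C_V ≤ C_V / M := by
    rw [div_eq_inv_mul]; gcongr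
  have hD : κ ≤ -F₁ ρ * ρ ^ 3 := by
    have : -F₁ ρ * ρ ^ 3 = (2 * m' - ρ ^ 3 * iteratedDeriv 1 V₀ ρ) / m := by
      simp only [F₁]; field_simp; ring
    rw [this, le_div_iff₀ hm0]
    exact hκm
  have habs : ∀ x y : ℝ, 0 < y → |x| * y = |x * y| := fun x y hy => by
    rw [abs_mul, abs_of_pos hy]
  have hF₂ : ∀ r > 0, |F₂ r| * r ^ 4 ≤ C_V / M + 6 * (1 + 1 / (4 * M)) := by
    intro r hr
    have e : |F₂ r| * r ^ 4 = m⁻¹ * |r ^ 4 * iteratedDeriv 2 V₀ r + 6 * m'| := by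
      rw [show |F₂ r| * r ^ 4 = |F₂ r * r ^ 4| from habs _ _ (pow_pos hr 4),
        show ∀ x : ℝ, m⁻¹ * |x| = |m⁻¹ * x| from fun x => by
          rw [abs_mul, abs_of_pos (inv_pos.mpr hm0)]]
      congr 1
      simp only [F₂]; field_simp
    rw [e]
    have := (abs_add_le (r ^ 4 * iteratedDeriv 2 V₀ r) (6 * m')).trans
      (add_le_add (hV2 r hr) (abs_of_pos (by positivity : 0 < 6 * m')).le)
    have := mul_le_mul_of_nonneg_left this (inv_pos.mpr hm0).le
    linarith
  have hF₃ : ∀ r > 0, |F₃ r| * r ^ 5 ≤ C_V / M + 24 * (1 + 1 / (4 * M)) := by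
    intro r hr
    have e : |F₃ r| * r ^ 5 = m⁻¹ * |r ^ 5 * iteratedDeriv 3 V₀ r - 24 * m'| := by
      rw [show |F₃ r| * r ^ 5 = |F₃ r * r ^ 5| from habs _ _ (pow_pos hr 5),
        show ∀ x : ℝ, m⁻¹ * |x| = |m⁻¹ * x| from fun x => by
          rw [abs_mul, abs_of_pos (inv_pos.mpr hm0)]]
      congr 1
      simp only [F₃]; field_simp
    rw [e]
    have := (abs_sub (r ^ 5 * iteratedDeriv 3 V₀ r) (24 * m')).trans
      (add_le_add (hV3 r hr) (abs_of_pos (by positivity : 0 < 24 * m')).le)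
    have := mul_le_mul_of_nonneg_left this (inv_pos.mpr hm0).le
    linarith
  have hAD : A ≤ K * -F₁ ρ * ρ ^ 3 := by
    have := mul_le_mul_of_nonneg_left hD hK0.le
    linarith
  have hM4 : 0 < 1 / (4 * M) := by positivity
  have hCM : 0 ≤ C_V / M := by positivity
  have hP := hpt (f h m E) F₁ F₂ F₃ ρ hρ0 (by rw [hfeq]; simp [hRE]) hF hD
    (by
      have h1 := hF₂ ρ hρ0
      refine le_of_mul_le_mul_right (a := ρ ^ 3) ?_ (by positivity)
      linarith)
    (fun r hr => by
      have hr0 : 0 < r := by linarith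
      have h1 := hF₃ r hr0
      have h2 : (ρ / 2) ^ 5 ≤ r ^ 5 := by gcongr
      have h3 := mul_le_mul_of_nonneg_left h2 (abs_nonneg (F₃ r))
      refine le_of_mul_le_mul_right (a := ρ ^ 3) ?_ (by positivity)
      have e : |F₃ r| * ρ ^ 2 * ρ ^ 3 = 32 * (|F₃ r| * (ρ / 2) ^ 5) := by ring
      rw [e]
      linarith)
  set d : ℝ := c / (8 * K) * √m with hd
  have hd0 : 0 < d := by positivity
  have hdρ : d ≤ ρ * (1 / (8 * K)) := by
    rw [hd, div_mul_eq_mul_div, div_eq_mul_one_div]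
    gcongr
  have hGb : ∀ r ∈ Ioo (ρ - d) (ρ + d) \ {ρ},
      |G h m E r| ≤ C * (√ρ)⁻¹ * |r - ρ| ^ (-(1 : ℝ) / 2) := by
    rintro r ⟨hr, hne⟩
    have hrd : |r - ρ| ≤ d := abs_le.mpr ⟨by linarith [hr.1], by linarith [hr.2]⟩
    have hKr : K * |r - ρ| ≤ ρ / 8 := by
      calc K * |r - ρ| ≤ K * (ρ * (1 / (8 * K))) := by gcongr; exact hrd.trans hdρ
        _ = ρ / 8 := by field_simp
    have hr0 : 0 < r := by nlinarith [(abs_le.mp hrd).1, abs_nonneg (r - ρ), neg_abs_le (r - ρ)]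
    have hd1 : deriv (f h m E) r = F₁ r := (hF r hr0).1.deriv
    have hd2 : deriv (deriv (f h m E)) r = F₂ r := by
      have : deriv (f h m E) =ᶠ[nhds r] F₁ := by
        filter_upwards [Ioi_mem_nhds hr0] with x hx using (hF x hx).1.deriv
      rw [this.deriv_eq, (hF r hr0).2.1.deriv]
    have := hP r hne hKr
    rw [hG, hd1, hd2, hζO, hρ, hg]
    exact this
  obtain ⟨hint, hval⟩ := integral_abs_rpow_neg_half ρ d hd0
  have hmeas : MeasurableSet (Ioo (ρ - d) (ρ + d) \ {ρ}) :=
    measurableSet_Ioo.diff (measurableSet_singleton ρ)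
  calc ∫ r in Ioo (ρ - d) (ρ + d) \ {ρ}, |G h m E r|
      ≤ ∫ r in Ioo (ρ - d) (ρ + d) \ {ρ}, C * (√ρ)⁻¹ * |r - ρ| ^ (-(1 : ℝ) / 2) := by
        refine integral_mono_of_nonneg (ae_of_all _ fun _ => abs_nonneg _)
          ((hint.mono_set sdiff_subset).const_mul _) ?_
        exact (ae_restrict_iff' hmeas).mpr (ae_of_all _ hGb)
    _ ≤ ∫ r in Ioo (ρ - d) (ρ + d), C * (√ρ)⁻¹ * |r - ρ| ^ (-(1 : ℝ) / 2) :=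
        setIntegral_mono_set (hint.const_mul _) (ae_of_all _ fun _ => by positivity)
          sdiff_subset.eventuallyLE
    _ = C * (√ρ)⁻¹ * (4 * √d) := by rw [MeasureTheory.integral_const_mul, hval]
    _ ≤ C * (√ρ)⁻¹ * (4 * √(ρ * (1 / (8 * K)))) := by gcongr
    _ = C * (4 * √(1 / (8 * K))) := by
        rw [Real.sqrt_mul hρ0.le]
        have : √ρ ≠ 0 := (Real.sqrt_pos.mpr hρ0).ne'
        field_simp
end
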